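/- arXiv:2402.05017 — 4 statements merged into one kernel-verified Lean document; each statement's English description precedes it below -/
import Mathlib

section
/- Let (a_k)_{k=0}^∞ be a nonnegative real sequence such that the power series A(z) = ∑_{k=0}^∞ a_k z^k has a finite (positive) radius of convergence (equivalently, its sum extends to a meromorphic function on ℂ with at least one pole). Then (a_k) is a TP_∞-preserver if and only if there exist constants C > 0 and β > 0 such that a_k = C·β^k for every k ≥ 0 (i.e., A(z) = C/(1 − βz)). -/
/-- A real sequence `(a_k)` is totally positive (TP_∞) if all finite minors of the
infinite Toeplitz matrix `(a_{j-i})` (with `a_k = 0` for `k < 0`) are nonnegative. -/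
def IsTotallyPositive (a : ℕ → ℝ) : Prop :=
  ∀ (n : ℕ) (i j : Fin n → ℕ), StrictMono i → StrictMono j →
    0 ≤ (Matrix.of fun p q : Fin n => if i p ≤ j q then a (j q - i p) else 0).det

/-- A real sequence is `m`-times positive (TP_m) if all such minors of order at most `m`
are nonnegative. -/
def IsMultiplyPositive (m : ℕ) (a : ℕ → ℝ) : Prop :=
  ∀ (n : ℕ), n ≤ m → ∀ (i j : Fin n → ℕ), StrictMono i → StrictMono j →
    0 ≤ (Matrix.of fun p q : Fin n => if i p ≤ j q then a (j q - i p) else 0).det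

/-- A nonnegative sequence `(a_k)` is a TP_∞-preserver if for every totally positive
sequence `(b_k)`, the sequence `(a_k b_k)` is totally positive. -/
def IsTPPreserver (a : ℕ → ℝ) : Prop :=
  ∀ b : ℕ → ℝ, IsTotallyPositive b → IsTotallyPositive (fun k => a k * b k)

/-- The Toeplitz entry. -/
def tpT (c : ℕ → ℝ) (i j : ℕ) : ℝ := if i ≤ j then c (j - i) else 0

lemma tp_iff (c : ℕ → ℝ) : IsTotallyPositive c ↔ ∀ (n : ℕ) (i j : Fin n → ℕ),
    StrictMono i → StrictMono j → 0 ≤ (Matrix.of fun p q : Fin n => tpT c (i p) (j q)).det :=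
  Iff.rfl

lemma tpT_sum (c : ℕ → ℝ) (i j : ℕ) :
    tpT (fun k => ∑ l ∈ Finset.range (k + 1), c l) i j = ∑ l ∈ Finset.range (j + 1), tpT c i l := by
  induction j with
  | zero =>
    rcases Nat.eq_zero_or_pos i with h | h
    · subst h; simp [tpT]
    · have : ¬ i = 0 := by omega
      simp [tpT, this]
  | succ j ih =>
    rw [Finset.sum_range_succ, ← ih]
    unfold tpT
    by_cases h : i ≤ j
    · have h1 : i ≤ j + 1 := by omega
      have h2 : j + 1 - i = (j - i) + 1 := by omega
      rw [if_pos h, if_pos h1, if_pos h1, h2]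
      exact Finset.sum_range_succ _ (j - i + 1)
    · by_cases h1 : i ≤ j + 1
      · have h2 : j + 1 - i = 0 := by omega
        simp [h, h1, h2]
      · simp [h, h1]

lemma tp_sum (c : ℕ → ℝ) (hc : IsTotallyPositive c) :
    IsTotallyPositive (fun k => ∑ l ∈ Finset.range (k + 1), c l) := by
  rw [tp_iff] at *
  intro n i j hi hj
  cases n with
  | zero => simp
  | succ n =>
    let I : Fin (n + 1) → Finset ℕ := Fin.cons (Finset.range (j 0 + 1))
      (fun q : Fin n => Finset.Ico (j q.castSucc + 1) (j q.succ + 1))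
    have hdet : (Matrix.of fun p q : Fin (n + 1) =>
        tpT (fun k => ∑ l ∈ Finset.range (k + 1), c l) (i p) (j q)).det
        = (Matrix.of fun p q : Fin (n + 1) => ∑ l ∈ I q, tpT c (i p) l).det := by
      apply Matrix.det_eq_of_forall_col_eq_smul_add_pred (fun _ => 1)
      · intro p
        simp [tpT_sum, I]
      · intro p q
        have hlt : j q.castSucc < j q.succ := hj (Fin.castSucc_lt_succ)
        simp only [Matrix.of_apply, tpT_sum, I, Fin.cons_succ, one_mul]
        rw [← Finset.sum_range_add_sum_Ico _ (show j q.castSucc + 1 ≤ j q.succ + 1 by omega)]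
        ring
    rw [hdet, ← Matrix.det_transpose]
    have h2 := (Matrix.detRowAlternating (R := ℝ) (n := Fin (n + 1))).toMultilinearMap.map_sum_finset
      (fun q l => (fun p => tpT c (i p) l)) I
    have h3 : (Matrix.of fun p q : Fin (n + 1) => ∑ l ∈ I q, tpT c (i p) l).transpose.det
        = ∑ r ∈ Fintype.piFinset I,
          (Matrix.of fun q p : Fin (n + 1) => tpT c (i p) (r q)).det := by
      refine Eq.trans ?_ h2
      change Matrix.det _ = Matrix.det _
      congr 1
      ext q p
      simp [Matrix.transpose_apply, Finset.sum_apply]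
    rw [h3]
    apply Finset.sum_nonneg
    intro r hr
    rw [Fintype.mem_piFinset] at hr
    have hle : ∀ q, r q ≤ j q := by
      intro q
      refine Fin.cases ?_ (fun q => ?_) q
      · have := hr 0
        simp [I] at this; omega
      · have := hr q.succ
        simp [I] at this; omega
    have hmono : StrictMono r := by
      rw [Fin.strictMono_iff_lt_succ]
      intro q
      have h1 := hr q.succ
      have h2 := hle q.castSucc
      simp [I] at h1; omega
    rw [← Matrix.det_transpose]
    exact hc _ i r hi hmono

lemma tp_delta (m : ℕ) : IsTotallyPositive (fun k => if k = m then 1 else 0) := by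
  rw [tp_iff]
  intro n i j hi hj
  have hT : ∀ x y, tpT (fun k => if k = m then 1 else 0) x y = if x + m = y then 1 else 0 := by
    intro x y
    unfold tpT
    beta_reduce
    split_ifs <;> first | rfl | (exfalso; omega)
  simp only [hT]
  by_cases h : ∀ p, ∃ q, i p + m = j q
  · have hr : Set.range (fun p => i p + m) ⊆ Set.range j := by
      rintro _ ⟨p, rfl⟩
      obtain ⟨q, hq⟩ := h p
      exact ⟨q, hq.symm⟩
    have hi' : StrictMono (fun p => i p + m) := fun a b hab => Nat.add_lt_add_right (hi hab) m
    have heq : (fun p => i p + m) = j := by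
      apply (StrictMono.range_inj hi' hj).1
      apply Set.eq_of_subset_of_ncard_le hr
      · rw [← Set.image_univ, ← Set.image_univ, Set.ncard_image_of_injective _ hj.injective,
          Set.ncard_image_of_injective _ hi'.injective]
    have : (Matrix.of fun p q : Fin n => if i p + m = j q then (1 : ℝ) else 0) = 1 := by
      ext p q
      have := congrFun heq p
      beta_reduce at this
      simp [this, Matrix.one_apply, hj.injective.eq_iff]
    rw [this]; simp
  · push Not at h
    obtain ⟨p, hp⟩ := h
    rw [Matrix.det_eq_zero_of_row_eq_zero p]
    intro q
    simp [hp q]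

lemma tp_ones (m : ℕ) : IsTotallyPositive (fun k => if m ≤ k then 1 else 0) := by
  have := tp_sum _ (tp_delta m)
  convert this using 2 with k
  simp [Nat.lt_succ_iff]

lemma tp_lin (m : ℕ) : IsTotallyPositive (fun k => ((k + 1 - m : ℕ) : ℝ)) := by
  have := tp_sum _ (tp_ones m)
  convert this using 2 with k
  rw [Finset.sum_boole]
  congr 1
  have : (Finset.range (k + 1)).filter (fun l => m ≤ l) = Finset.Ico m (k + 1) := by
    ext l; simp; omega
  rw [this]; simp

lemma pres_tp {a : ℕ → ℝ} (h : IsTPPreserver a) : IsTotallyPositive a := by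
  have := h _ (tp_ones 0)
  simpa using this

lemma sm3 {x y z : ℕ} (h : x < y) (h' : y < z) : StrictMono ![x, y, z] := by
  rw [Fin.strictMono_iff_lt_succ]
  intro q
  fin_cases q <;> simp [h, h']

lemma sm2 {x y : ℕ} (h : x < y) : StrictMono ![x, y] := by
  rw [Fin.strictMono_iff_lt_succ]
  intro q
  fin_cases q; simp [h]

lemma tp2 {a : ℕ → ℝ} (h : IsTotallyPositive a) (i s t : ℕ) (hs : 0 < s) (ht : 0 < t) :
    a i * a (i + s + t) ≤ a (i + s) * a (i + t) := by
  have := h 2 ![0, s] ![i + s, i + s + t] (sm2 hs) (sm2 (by omega))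
  rw [Matrix.det_fin_two] at this
  have e1 : s ≤ i + s := by omega
  have e2 : s ≤ i + s + t := by omega
  have e3 : i + s + t - s = i + t := by omega
  simp [e1, e2, e3] at this
  linarith

lemma cubic1 {a : ℕ → ℝ} (h : IsTPPreserver a) (m : ℕ) :
    0 ≤ a (m + 1) ^ 3 - 2 * a m * a (m + 1) * a (m + 2) + a m ^ 2 * a (m + 3) := by
  have := h _ (tp_ones m) 3 ![0, 1, 2] ![m + 1, m + 2, m + 3] (sm3 (by omega) (by omega))
    (sm3 (by omega) (by omega))
  rw [Matrix.det_fin_three] at this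
  have e1 : m + 3 - 1 = m + 2 := by omega
  have e2 : m + 3 - 2 = m + 1 := by omega
  simp [e1, e2] at this
  have e6 : ∀ x : ℝ, (if 1 ≤ m then if m ≤ m - 1 then x else 0 else 0) = 0 := by
    intro x
    split_ifs <;> first | rfl | (exfalso; omega)
  rw [e6, e6] at this
  linarith [this]

lemma cubic2 {a : ℕ → ℝ} (h : IsTPPreserver a) (m : ℕ) :
    0 ≤ 27 * a (m + 2) ^ 3 - 48 * a (m + 1) * a (m + 2) * a (m + 3) + 16 * a m * a (m + 3) ^ 2
      + 20 * a (m + 1) ^ 2 * a (m + 4) - 15 * a m * a (m + 2) * a (m + 4) := by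
  have := h _ (tp_lin m) 3 ![0, 1, 2] ![m + 2, m + 3, m + 4] (sm3 (by omega) (by omega))
    (sm3 (by omega) (by omega))
  rw [Matrix.det_fin_three] at this
  have e1 : m + 3 - 1 = m + 2 := by omega
  have e2 : m + 3 - 2 = m + 1 := by omega
  have e3 : m + 4 - 1 = m + 3 := by omega
  have e4 : m + 4 - 2 = m + 2 := by omega
  have e5 : m + 2 - 1 = m + 1 := by omega
  have f0 : m + 1 - m = 1 := by omega
  have f1 : m + 1 + 1 - m = 2 := by omega
  have f2 : m + 2 + 1 - m = 3 := by omega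
  have f3 : m + 3 + 1 - m = 4 := by omega
  have f4 : m + 4 + 1 - m = 5 := by omega
  have g1 : 1 ≤ m + 2 := by omega
  have g2 : 1 ≤ m + 3 := by omega
  have g3 : 1 ≤ m + 4 := by omega
  have g4 : 2 ≤ m + 3 := by omega
  have g5 : 2 ≤ m + 4 := by omega
  have g6 : 2 ≤ m + 2 := by omega
  simp only [Matrix.of_apply, Matrix.cons_val, e1, e2, e3, e4, e5, f0, f1, f2, f3, f4, g1, g2, g3,
    g4, g5, g6, Nat.zero_le, if_true, Nat.sub_zero, Nat.add_sub_cancel] at this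
  push_cast at this
  nlinarith [this]

lemma geo_pres (a : ℕ → ℝ) (C β : ℝ) (hC : 0 < C) (hβ : 0 < β) (h : ∀ k, a k = C * β ^ k) :
    IsTPPreserver a := by
  intro b hb n i j hi hj
  have key : (Matrix.of fun p q : Fin n => if i p ≤ j q then a (j q - i p) * b (j q - i p) else 0)
      = Matrix.of fun p q => (C * (β ^ i p)⁻¹) * (Matrix.of fun p q : Fin n => β ^ j q *
        (Matrix.of fun p q : Fin n => if i p ≤ j q then b (j q - i p) else 0) p q) p q := by
    ext p q
    simp only [Matrix.of_apply]
    split_ifs with hpq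
    · rw [h, pow_sub₀ _ hβ.ne' hpq]; ring
    · simp
  rw [key, Matrix.det_mul_column, Matrix.det_mul_row]
  have := hb n i j hi hj
  positivity

/-- Core local inequality. -/
lemma local_zero (x y z : ℝ) (hx : 0 ≤ x) (hx' : x ≤ 1 / 100) (hy : 0 ≤ y) (hy' : y ≤ 1 / 100)
    (hz : 0 ≤ z) (h1 : 0 ≤ 1 - 2 * (1 - x) + (1 - x) ^ 2 * (1 - y))
    (h2 : 0 ≤ 27 - 48 * (1 - y) + 16 * (1 - y) ^ 2 * (1 - x) + 20 * (1 - y) ^ 2 * (1 - z)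
      - 15 * (1 - y) ^ 2 * (1 - x) * (1 - z)) : x = 0 := by
  have k1 : (1 - x) ^ 2 * y ≤ x ^ 2 := by nlinarith
  have k2 : (98 / 100 : ℝ) ≤ (1 - x) ^ 2 := by nlinarith
  have k3 : (98 / 100 : ℝ) ≤ (1 - y) ^ 2 := by nlinarith
  have k4 : (1 - y) ^ 2 * (x + 5 * z + 15 * (x * z)) ≤ 6 * y + 21 * y ^ 2 := by nlinarith
  have k5 : (98 / 100) * y ≤ x ^ 2 := le_trans (mul_le_mul_of_nonneg_right k2 hy) k1
  have hxz : 0 ≤ x * z := mul_nonneg hx hz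
  have k6 : (98 / 100) * x ≤ 6 * y + 21 * y ^ 2 := by
    refine le_trans ?_ k4
    exact mul_le_mul k3 (by linarith) hx (by positivity)
  have k7 : x ^ 2 ≤ (1 / 100) * x := by nlinarith
  have k8 : y ^ 2 ≤ (1 / 100) * y := by nlinarith
  linarith

lemma descend {a : ℕ → ℝ} (ha : ∀ k, 0 ≤ a k) (h : IsTPPreserver a) (k : ℕ)
    (hp : ∀ j, k + 1 ≤ j → 0 < a j ∧ a j * a (j + 2) = a (j + 1) ^ 2) :
    0 < a k ∧ a k * a (k + 2) = a (k + 1) ^ 2 := by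
  have hF := cubic2 h k
  obtain ⟨p1, q1⟩ := hp (k + 1) (by omega)
  obtain ⟨p2, q2⟩ := hp (k + 2) (by omega)
  have hL := tp2 (pres_tp h) k 1 1 one_pos one_pos
  simp only [add_assoc, Nat.reduceAdd] at *
  set c := a (k + 1)
  obtain ⟨r, hr⟩ : ∃ r, a (k + 2) = c * r := ⟨a (k + 2) / c, by field_simp⟩
  have hr0 : 0 < r := by rw [hr] at p2; exact pos_of_mul_pos_right p2 p1.le
  have h3 : a (k + 3) = c * r ^ 2 := by
    rw [hr] at q1
    apply mul_left_cancel₀ p1.ne'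
    rw [q1]; ring
  have h4 : a (k + 4) = c * r ^ 3 := by
    rw [hr, h3] at q2
    apply mul_left_cancel₀ (mul_pos p1 hr0).ne'
    rw [q2]; ring
  rw [hr, h3, h4] at hF
  rw [hr] at hL ⊢
  have hF' : 0 ≤ (c ^ 2 * r ^ 3) * (a k * r - c) := by
    have : (c ^ 2 * r ^ 3) * (a k * r - c) = 27 * (c * r) ^ 3 - 48 * c * (c * r) * (c * r ^ 2)
      + 16 * a k * (c * r ^ 2) ^ 2 + 20 * c ^ 2 * (c * r ^ 3) - 15 * a k * (c * r) * (c * r ^ 3) := by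
      ring
    rw [this]; linarith [hF]
  have hF2 := nonneg_of_mul_nonneg_right hF' (by positivity)
  have e1 : a k * r = c := by
    apply le_antisymm
    · have : c * (a k * r) ≤ c * c := by linarith
      exact le_of_mul_le_mul_left this p1
    · linarith
  constructor
  · rcases (ha k).lt_or_eq with h0 | h0
    · exact h0
    · rw [← h0] at e1; simp at e1; exact absurd e1.symm p1.ne'
  · rw [sq, ← e1]; ring

lemma main_dir (a : ℕ → ℝ) (ha : ∀ k, 0 ≤ a k)
    (hdiv : ∃ r : ℝ, 0 < r ∧ ¬ Summable fun k => a k * r ^ k) (h : IsTPPreserver a) :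
    ∃ C β : ℝ, 0 < C ∧ 0 < β ∧ ∀ k, a k = C * β ^ k := by
  obtain ⟨R, hR, hns⟩ := hdiv
  have htp := pres_tp h
  have hinf : ∀ N, ∃ k, N ≤ k ∧ 0 < a k := by
    intro N
    by_contra hcon
    push Not at hcon
    apply hns
    apply summable_of_ne_finset_zero (s := Finset.range N)
    intro b hb
    have : a b = 0 := le_antisymm (hcon b (by simpa using hb)) (ha b)
    simp [this]
  obtain ⟨i, -, hi⟩ := hinf 0
  have hpos : ∀ j, i ≤ j → 0 < a j := by
    intro j hj
    rcases hj.eq_or_lt with rfl | hj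
    · exact hi
    rcases (ha j).lt_or_eq with h0 | h0
    · exact h0
    exfalso
    obtain ⟨l, hl, hl0⟩ := hinf (j + 1)
    have := tp2 htp i (j - i) (l - j) (by omega) (by omega)
    have e1 : i + (j - i) = j := by omega
    have e2 : j + (l - j) = l := by omega
    rw [e1, e2, ← h0] at this
    have := mul_pos hi hl0
    linarith
  -- ratios
  let r : ℕ → ℝ := fun k => a (i + k + 1) / a (i + k)
  have hrpos : ∀ k, 0 < r k := fun k => div_pos (hpos _ (by omega)) (hpos _ (by omega))
  have hanti : Antitone r := by
    apply antitone_nat_of_succ_le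
    intro k
    have := tp2 htp (i + k) 1 1 one_pos one_pos
    have p1 := hpos (i + k) (by omega)
    have p2 := hpos (i + k + 1) (by omega)
    change a (i + k + 1 + 1) / a (i + k + 1) ≤ a (i + k + 1) / a (i + k)
    rw [div_le_div_iff₀ p2 p1]
    linarith
  obtain ⟨L, hL⟩ : ∃ L, Filter.Tendsto r Filter.atTop (nhds L) :=
    ⟨_, tendsto_atTop_ciInf hanti ⟨0, by rintro _ ⟨k, rfl⟩; exact (hrpos k).le⟩⟩
  have hL0 : 0 ≤ L := ge_of_tendsto' hL fun k => (hrpos k).le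
  have hLpos : 0 < L := by
    rcases hL0.lt_or_eq with h0 | h0
    · exact h0
    exfalso
    apply hns
    rw [← summable_nat_add_iff i]
    apply summable_of_ratio_test_tendsto_lt_one (l := 0) zero_lt_one
    · filter_upwards with k
      have := hpos (k + i) (by omega)
      positivity
    · have : Filter.Tendsto (fun k => r k * R) Filter.atTop (nhds 0) := by
        have := hL.mul_const R
        rwa [← h0, zero_mul] at this
      refine this.congr fun k => ?_
      have p1 := hpos (i + k) (by omega)
      have p2 := hpos (i + k + 1) (by omega)
      have e1 : k + 1 + i = i + k + 1 := by omega
      have e2 : k + i = i + k := by omega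
      rw [e1, e2, Real.norm_of_nonneg (by positivity), Real.norm_of_nonneg (by positivity)]
      simp only [r]
      rw [pow_succ]
      field_simp
  let d : ℕ → ℝ := fun k => 1 - r (k + 1) / r k
  have hd0 : ∀ k, 0 ≤ d k := fun k => by
    have := (div_le_one (hrpos k)).2 (hanti (Nat.le_succ k))
    simp only [d]; linarith
  have hdt : Filter.Tendsto d Filter.atTop (nhds 0) := by
    have h1 : Filter.Tendsto (fun k => r (k + 1)) Filter.atTop (nhds L) :=
      hL.comp (Filter.tendsto_add_atTop_nat 1)
    have := (h1.div hL hLpos.ne').const_sub 1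
    simpa [div_self hLpos.ne'] using this
  obtain ⟨K, hK⟩ := Filter.eventually_atTop.1
    (hdt.eventually_le_const (show (0 : ℝ) < 1 / 100 by norm_num))
  have hd : ∀ k, K ≤ k → d k = 0 := by
    intro k hk
    have p0 := hpos (i + k) (by omega)
    have p1 := hpos (i + k + 1) (by omega)
    have p2 := hpos (i + k + 2) (by omega)
    have p3 := hpos (i + k + 3) (by omega)
    have p4 := hpos (i + k + 4) (by omega)
    have c1 := cubic1 h (i + k)
    have c2 := cubic2 h (i + k)
    apply local_zero (d k) (d (k + 1)) (d (k + 2)) (hd0 _) (hK _ hk) (hd0 _) (hK _ (by omega))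
      (hd0 _)
    · refine (div_nonneg c1 (pow_pos p1 3).le).trans_eq ?_
      simp only [d, r, ← add_assoc]
      field_simp
      ring
    · refine (div_nonneg c2 (pow_pos p2 3).le).trans_eq ?_
      simp only [d, r, ← add_assoc]
      field_simp
      ring
  have hbase : ∀ j, i + K ≤ j → 0 < a j ∧ a j * a (j + 2) = a (j + 1) ^ 2 := by
    intro j hj
    refine ⟨hpos j (by omega), ?_⟩
    have := hd (j - i) (by omega)
    have e : i + (j - i) = j := by omega
    have p0 := hpos j (by omega)
    have p1 := hpos (j + 1) (by omega)
    have p2 := hpos (j + 2) (by omega)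
    simp only [d, r, ← add_assoc, e] at this
    field_simp at this
    linarith
  have hall : ∀ n, ∀ j, i + K - n ≤ j → 0 < a j ∧ a j * a (j + 2) = a (j + 1) ^ 2 := by
    intro n
    induction n with
    | zero => simpa using hbase
    | succ n ih =>
      intro j hj
      by_cases hj' : i + K - n ≤ j
      · exact ih j hj'
      · exact descend ha h j fun l hl => ih l (by omega)
  have hfin : ∀ j, 0 < a j ∧ a j * a (j + 2) = a (j + 1) ^ 2 := fun j => hall (i + K) j (by omega)
  have q0 := (hfin 0).1
  have q1 := (hfin 1).1
  refine ⟨a 0, a 1 / a 0, q0, div_pos q1 q0, ?_⟩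
  have step : ∀ k, a (k + 1) = a k * (a 1 / a 0) := by
    intro k
    induction k with
    | zero => field_simp
    | succ k ih =>
      have pk := (hfin k).1
      apply mul_left_cancel₀ pk.ne'
      rw [(hfin k).2, sq]
      nth_rewrite 1 [ih]
      ring
  intro k
  induction k with
  | zero => simp
  | succ k ih => rw [step, ih, pow_succ]; ring

/-- If the generating function of a nonnegative sequence has a finite
positive radius of convergence (it converges somewhere but not everywhere on the
positive axis), then the sequence is a TP_∞-preserver iff `a k = C * β ^ k` for some
`C > 0`, `β > 0` (i.e. `A(z) = C / (1 - β z)`). -/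
theorem stmt_0 (a : ℕ → ℝ) (ha : ∀ k, 0 ≤ a k)
    (hconv : ∃ r : ℝ, 0 < r ∧ Summable fun k => a k * r ^ k)
    (hdiv : ∃ r : ℝ, 0 < r ∧ ¬ Summable fun k => a k * r ^ k) :
    IsTPPreserver a ↔ ∃ C β : ℝ, 0 < C ∧ 0 < β ∧ ∀ k, a k = C * β ^ k := by
  constructor
  · exact main_dir a ha hdiv
  · rintro ⟨C, β, hC, hβ, h⟩
    exact geo_pres a C β hC hβ h
end

section
/- Let (a_k)_{k=0}^∞ be a nonnegative sequence with a_k > 0 for 0 ≤ k ≤ 4 and a_k = 0 for all k ≥ 5. Then (a_k) is a TP_∞-preserver if and only if the three polynomials ∑_{k=0}^4 a_k x^k, ∑_{k=1}^4 a_k x^k and ∑_{k=2}^4 a_k x^k all have only real (necessarily nonpositive) zeros. Moreover, (a_k) maps every TP_∞ sequence to a TP_∞ sequence if and only if it maps every 4-times positive sequence to a TP_∞ sequence. -/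
/-- Staircase 0/1 matrices have nonnegative determinant. -/
lemma stair_det_nonneg : ∀ (n : ℕ) (i j : Fin n → ℕ), StrictMono i → StrictMono j →
    0 ≤ (Matrix.of fun p q : Fin n => if i p ≤ j q then (1 : ℝ) else 0).det := by
  intro n
  induction n with
  | zero => intro i j _ _; simp
  | succ n ih =>
    intro i j hi hj
    by_cases h0 : i 0 ≤ j 0
    · by_cases h1 : ∃ p : Fin (n + 1), p ≠ 0 ∧ i p ≤ j 0
      · obtain ⟨p, hp, hpj⟩ := h1
        have : (Matrix.of fun p q : Fin (n+1) => if i p ≤ j q then (1 : ℝ) else 0).det = 0 := by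
          apply Matrix.det_zero_of_row_eq hp
          funext q
          have hq : j 0 ≤ j q := hj.monotone (Fin.zero_le q)
          simp [le_trans hpj hq, le_trans h0 hq]
        rw [this]
      · push Not at h1
        rw [Matrix.det_succ_column_zero, Fin.sum_univ_succ]
        have hz : ∀ p : Fin n, ¬ (i p.succ ≤ j 0) := fun p =>
          not_le.mpr (h1 p.succ (Fin.succ_ne_zero p))
        simp only [Matrix.of_apply, h0, hz, if_true, if_false]
        simp only [Fin.val_zero, pow_zero, mul_one, one_mul, mul_zero, zero_mul,
          Finset.sum_const_zero, add_zero]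
        have := ih (fun p => i p.succ) (fun q => j q.succ)
          (fun a b hab => hi (Fin.succ_lt_succ_iff.mpr hab))
          (fun a b hab => hj (Fin.succ_lt_succ_iff.mpr hab))
        exact this
    · have : (Matrix.of fun p q : Fin (n+1) => if i p ≤ j q then (1 : ℝ) else 0).det = 0 := by
        apply Matrix.det_eq_zero_of_column_eq_zero 0
        intro p
        have hp : i 0 ≤ i p := hi.monotone (Fin.zero_le p)
        simp only [Matrix.of_apply]
        rw [if_neg]
        omega
      rw [this]

lemma ones_tp (s : ℕ) : IsTotallyPositive (fun k => if s ≤ k then (1 : ℝ) else 0) := by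
  intro n i j hi hj
  have h := stair_det_nonneg n (fun p => i p + s) j (fun a b hab => by
    have := hi hab; simp only; omega) hj
  convert h using 2
  congr 1
  funext p q
  by_cases h1 : i p + s ≤ j q
  · have h2 : i p ≤ j q := by omega
    have h3 : s ≤ j q - i p := by omega
    simp [h1, h2, h3]
  · by_cases h2 : i p ≤ j q
    · have h3 : ¬ s ≤ j q - i p := by omega
      simp [h1, h2, h3]
    · simp [h1, h2]

/-- No strictly alternating vector in the column space of a `(k+1) × k` TP matrix. -/
lemma no_alt : ∀ (k : ℕ) (V : Matrix (Fin (k + 1)) (Fin k) ℝ),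
    (∀ (n : ℕ) (i : Fin n → Fin (k + 1)) (j : Fin n → Fin k), StrictMono i → StrictMono j →
      0 ≤ (V.submatrix i j).det) →
    ∀ c : Fin k → ℝ, ¬ ∀ i : Fin (k + 1), 0 < (-1 : ℝ) ^ (i : ℕ) * (V.mulVec c) i := by
  intro k
  induction k with
  | zero =>
    intro V _ c h
    have := h 0
    simp [Matrix.mulVec, dotProduct] at this
  | succ k ih =>
    intro V hV c h
    set y := V.mulVec c with hy
    -- augmented matrix
    let A : Matrix (Fin (k + 2)) (Fin (k + 2)) ℝ := Matrix.of fun i => Fin.cons (y i) (V i)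
    have hA : A.det = 0 := by
      apply Matrix.exists_mulVec_eq_zero_iff.mp
      refine ⟨Fin.cons (-1) c, ?_, ?_⟩
      · intro h0
        have := congrFun h0 0
        simp at this
      · funext i
        simp only [Matrix.mulVec, dotProduct, Fin.sum_univ_succ, A, Matrix.of_apply,
          Fin.cons_zero, Fin.cons_succ, Pi.zero_apply, hy]
        ring
    rw [Matrix.det_succ_column_zero] at hA
    have hsub : ∀ i : Fin (k + 2), A.submatrix i.succAbove Fin.succ = V.submatrix i.succAbove id := by
      intro i; ext p q; simp [A]
    have hnn : ∀ i : Fin (k + 2), 0 ≤ (-1 : ℝ) ^ (i : ℕ) * A i 0 *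
        (A.submatrix i.succAbove Fin.succ).det := by
      intro i
      rw [hsub]
      apply mul_nonneg
      · exact (h i).le
      · exact hV _ _ _ (Fin.strictMono_succAbove i) strictMono_id
    have hall := (Finset.sum_eq_zero_iff_of_nonneg (fun i _ => hnn i)).mp hA (Fin.last (k + 1))
      (Finset.mem_univ _)
    have hM : (V.submatrix (Fin.last (k+1)).succAbove id).det = 0 := by
      rw [hsub] at hall
      rcases mul_eq_zero.mp hall with h1 | h1
      · exact absurd h1 (h _).ne'
      · exact h1
    obtain ⟨d, hd, hVd⟩ := Matrix.exists_mulVec_eq_zero_iff.mpr hM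
    obtain ⟨q, hq⟩ : ∃ q, d q ≠ 0 := by
      by_contra hcon; push Not at hcon; exact hd (funext hcon)
    refine ih (V.submatrix Fin.castSucc q.succAbove) ?_
      (fun s => c (q.succAbove s) - c q / d q * d (q.succAbove s)) ?_
    · intro n i j hi hj
      have := hV n (fun p => (i p).castSucc) (fun p => q.succAbove (j p))
        (fun a b hab => Fin.castSucc_lt_castSucc_iff.mpr (hi hab))
        ((Fin.strictMono_succAbove q).comp hj)
      exact this
    · intro i
      have hi := h i.castSucc
      have e1 : y i.castSucc = V i.castSucc q * c q + ∑ s, V i.castSucc (q.succAbove s) * c (q.succAbove s) := by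
        simp only [hy, Matrix.mulVec, dotProduct]
        rw [Fin.sum_univ_succAbove _ q]
      have e2 : V i.castSucc q * d q + ∑ s, V i.castSucc (q.succAbove s) * d (q.succAbove s) = 0 := by
        have := congrFun hVd i
        simp only [Matrix.mulVec, dotProduct, Matrix.submatrix_apply, Fin.succAbove_last, id,
          Pi.zero_apply] at this
        rw [Fin.sum_univ_succAbove _ q] at this
        exact this
      have e3 : ((V.submatrix Fin.castSucc q.succAbove).mulVec
          (fun s => c (q.succAbove s) - c q / d q * d (q.succAbove s))) i = y i.castSucc := by
        simp only [Matrix.mulVec, dotProduct, Matrix.submatrix_apply]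
        rw [e1]
        have : ∑ s, V i.castSucc (q.succAbove s) * (c (q.succAbove s) - c q / d q * d (q.succAbove s))
          = ∑ s, V i.castSucc (q.succAbove s) * c (q.succAbove s)
            - c q / d q * ∑ s, V i.castSucc (q.succAbove s) * d (q.succAbove s) := by
          rw [Finset.mul_sum, ← Finset.sum_sub_distrib]
          exact Finset.sum_congr rfl (fun s _ => by ring)
        rw [this]
        have e4 : ∑ s, V i.castSucc (q.succAbove s) * d (q.succAbove s) = - (V i.castSucc q * d q) := by
          linarith
        rw [e4]
        field_simp
        ring
      rw [e3]
      simpa using hi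

/-- Grouping columns into blocks keeps minors nonnegative. -/
lemma group_tp {m N k : ℕ} (A : Matrix (Fin m) (Fin N) ℝ)
    (hA : ∀ (n : ℕ) (i : Fin n → Fin m) (j : Fin n → Fin N), StrictMono i → StrictMono j →
      0 ≤ (A.submatrix i j).det)
    (b : Fin N → Fin k) (hb : Monotone b) (w : Fin N → ℝ) (hw : ∀ j, 0 ≤ w j)
    (n : ℕ) (i : Fin n → Fin m) (s : Fin n → Fin k) (hi : StrictMono i) (hs : StrictMono s) :
    0 ≤ ((Matrix.of fun (p : Fin m) (q : Fin k) =>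
      ∑ j, (if b j = q then w j else 0) * A p j).submatrix i s).det := by
  rw [← Matrix.det_transpose]
  have e : ((Matrix.of fun (p : Fin m) (q : Fin k) =>
      ∑ j, (if b j = q then w j else 0) * A p j).submatrix i s).transpose.det =
      Matrix.detRowAlternating (R := ℝ) (n := Fin n)
        (fun q => ∑ j : Fin N, (if b j = s q then w j else 0) • (fun p => A (i p) j)) := by
    change Matrix.det _ = Matrix.det _
    congr 1
    ext q p
    simp only [Matrix.transpose_apply, Matrix.submatrix_apply, Matrix.of_apply, Finset.sum_apply,
      Pi.smul_apply, smul_eq_mul]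
  rw [e]
  have e2 := (Matrix.detRowAlternating (R := ℝ) (n := Fin n)).toMultilinearMap.map_sum
    (fun q (j : Fin N) => (if b j = s q then w j else 0) • (fun p => A (i p) j))
  simp only [AlternatingMap.coe_multilinearMap] at e2
  rw [e2]
  apply Finset.sum_nonneg
  intro r _
  have e3 := (Matrix.detRowAlternating (R := ℝ) (n := Fin n)).toMultilinearMap.map_smul_univ
    (fun q => (if b (r q) = s q then w (r q) else 0)) (fun q p => A (i p) (r q))
  simp only [AlternatingMap.coe_multilinearMap] at e3
  rw [e3, smul_eq_mul]
  by_cases hr : ∀ q, b (r q) = s q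
  · apply mul_nonneg
    · apply Finset.prod_nonneg
      intro q _
      split_ifs
      · exact hw _
      · exact le_rfl
    · have hrm : StrictMono r := by
        intro q q' hqq
        by_contra hcon
        have h1 := hb (not_lt.mp hcon)
        rw [hr, hr] at h1
        exact absurd (hs hqq) (not_lt.mpr h1)
      have := hA n i r hi hrm
      rw [← Matrix.det_transpose] at this
      exact this
  · push Not at hr
    obtain ⟨q, hq⟩ := hr
    rw [Finset.prod_eq_zero (Finset.mem_univ q) (by simp [hq]), zero_mul]

lemma var_dim {N k : ℕ} (A : Matrix (Fin (k+1)) (Fin N) ℝ)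
    (hA : ∀ (n : ℕ) (i : Fin n → Fin (k+1)) (j : Fin n → Fin N), StrictMono i → StrictMono j →
      0 ≤ (A.submatrix i j).det)
    (b : Fin N → Fin k) (hb : Monotone b) (x : Fin N → ℝ)
    (hx : ∀ j, 0 ≤ (-1 : ℝ) ^ (b j : ℕ) * x j) :
    ¬ ∀ i : Fin (k + 1), 0 < (-1 : ℝ) ^ (i : ℕ) * (∑ j, A i j * x j) := by
  intro h
  refine no_alt k _ (group_tp A hA b hb (fun j => (-1 : ℝ) ^ (b j : ℕ) * x j) hx)
    (fun q => (-1 : ℝ) ^ (q : ℕ)) ?_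
  intro i
  convert h i using 2
  simp only [Matrix.mulVec, dotProduct, Matrix.of_apply, Finset.sum_mul]
  rw [Finset.sum_comm]
  apply Finset.sum_congr rfl
  intro j _
  rw [Finset.sum_eq_single (b j)]
  · simp only [if_true]
    have : ((-1 : ℝ) ^ (b j : ℕ)) * (-1 : ℝ) ^ (b j : ℕ) = 1 := by
      rw [← mul_pow]; simp
    linear_combination (A i j * x j) * this
  · intro q _ hq
    simp [hq.symm]
  · simp


lemma toeplitz_root_sum (c x : ℕ → ℝ) (h5 : ∀ k, 5 ≤ k → c k = 0) (K i : ℕ) (hi : i ≤ K) :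
    ∑ j ∈ Finset.range (K + 5), (if i ≤ j then c (j - i) else 0) * x j
      = ∑ k ∈ Finset.range 5, c k * x (i + k) := by
  have e : K + 5 = i + (5 + (K - i)) := by omega
  rw [e, Finset.sum_range_add, Finset.sum_range_add]
  have z1 : ∑ j ∈ Finset.range i, (if i ≤ j then c (j - i) else 0) * x j = 0 := by
    apply Finset.sum_eq_zero
    intro j hj
    have := Finset.mem_range.mp hj
    rw [if_neg (by omega), zero_mul]
  have z2 : ∑ j ∈ Finset.range (K - i),
      (if i ≤ i + (5 + j) then c (i + (5 + j) - i) else 0) * x (i + (5 + j)) = 0 := by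
    apply Finset.sum_eq_zero
    intro j hj
    rw [h5 (i + (5 + j) - i) (by omega)]
    simp
  rw [z1, z2, zero_add, add_zero]
  apply Finset.sum_congr rfl
  intro k _
  simp

lemma exists_phase (θ : ℝ) : ∃ φ : ℝ, 0 < φ ∧ φ < 1 ∧ ∀ k : ℕ, Real.sin (θ * k + φ) ≠ 0 := by
  let S : Set ℝ := Set.range (fun p : ℤ × ℕ => (p.1 : ℝ) * Real.pi - θ * p.2)
  have hS : S.Countable := Set.countable_range _
  have hne : ¬ (Set.Ioo (0:ℝ) 1 ⊆ S) := by
    intro hsub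
    have := hS.mono hsub
    exact (Cardinal.Real.Ioo_countable_iff (x := (0:ℝ)) (y := 1)).mp this |>.not_gt one_pos
  obtain ⟨φ, hφ, hφS⟩ := Set.not_subset.mp hne
  refine ⟨φ, hφ.1, hφ.2, ?_⟩
  intro k hk
  obtain ⟨n, hn⟩ := Real.sin_eq_zero_iff.mp hk
  apply hφS
  refine ⟨(n, k), ?_⟩
  simp only
  linarith

lemma sin_floor_sign (u : ℝ) (hu : 0 ≤ u) (hs : Real.sin u ≠ 0) :
    0 < (-1 : ℝ) ^ (⌊u / Real.pi⌋₊) * Real.sin u := by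
  set n := ⌊u / Real.pi⌋₊ with hn
  have hpi := Real.pi_pos
  have h1 : (n : ℝ) * Real.pi ≤ u := by
    have := Nat.floor_le (div_nonneg hu hpi.le)
    rw [← hn, le_div_iff₀ hpi] at this
    exact this
  have h2 : u < (n + 1 : ℝ) * Real.pi := by
    have := Nat.lt_floor_add_one (u / Real.pi)
    rw [← hn, div_lt_iff₀ hpi] at this
    exact this
  have h3 : Real.sin (u - n * Real.pi) = (-1 : ℝ) ^ n * Real.sin u := Real.sin_sub_nat_mul_pi u n
  rw [← h3]
  have h4 : 0 ≤ Real.sin (u - n * Real.pi) :=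
    Real.sin_nonneg_of_nonneg_of_le_pi (by linarith) (by nlinarith)
  refine lt_of_le_of_ne h4 ?_
  rw [h3]
  intro h
  exact (mul_ne_zero (pow_ne_zero _ (by norm_num)) hs) h.symm

/-- The nontrivial direction of Aissen-Schoenberg-Whitney, upper half plane. -/
lemma asw_upper (c : ℕ → ℝ) (hc : IsTotallyPositive c) (h5 : ∀ k, 5 ≤ k → c k = 0)
    (R : ℝ) (hR : 0 < R) (hfR : ∑ k ∈ Finset.range 5, c k * (-R) ^ k ≠ 0) (z : ℂ)
    (hz : ∑ k ∈ Finset.range 5, (c k : ℂ) * z ^ k = 0) (him : 0 < z.im) : False := by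
  set θ := Complex.arg z with hθ
  have hpi := Real.pi_pos
  have hθ0 : 0 < θ := by
    have h1 : 0 ≤ θ := Complex.arg_nonneg_iff.mpr him.le
    refine lt_of_le_of_ne h1 (fun h => ?_)
    have := Complex.arg_eq_zero_iff.mp h.symm
    exact him.ne' this.2
  have hθpi : θ < Real.pi := Complex.arg_lt_pi_iff.mpr (Or.inr him.ne')
  have hz0 : z ≠ 0 := by rintro rfl; simp at him
  set r := ‖z‖ with hr
  have hr0 : 0 < r := norm_pos_iff.mpr hz0
  obtain ⟨φ, hφ0, hφ1, hφ⟩ := exists_phase θ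
  -- number of blocks
  obtain ⟨K, hK⟩ : ∃ K : ℕ, θ * (K + 4) + φ < K * Real.pi := by
    obtain ⟨K, hK⟩ := exists_nat_gt ((4 * θ + φ) / (Real.pi - θ))
    refine ⟨K, ?_⟩
    rw [div_lt_iff₀ (by linarith)] at hK
    linarith
  let x0 : ℕ → ℝ := fun j => (Complex.exp (φ * Complex.I) * z ^ j).im
  have hx0 : ∀ j : ℕ, x0 j = r ^ j * Real.sin (θ * j + φ) := by
    intro j
    have hzp : z = r * Complex.exp (θ * Complex.I) := (Complex.norm_mul_exp_arg_mul_I z).symm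
    have : Complex.exp (φ * Complex.I) * z ^ j =
        ((r ^ j : ℝ) : ℂ) * Complex.exp (((θ * j + φ : ℝ) : ℂ) * Complex.I) := by
      conv_lhs => rw [hzp]
      rw [mul_pow, ← Complex.exp_nat_mul]
      have : Complex.exp (((θ * j + φ : ℝ) : ℂ) * Complex.I) =
          Complex.exp (φ * Complex.I) * Complex.exp (j * (θ * Complex.I)) := by
        rw [← Complex.exp_add]; congr 1; push_cast; ring
      rw [this]; push_cast; ring
    simp only [x0]
    rw [this, Complex.im_ofReal_mul, Complex.exp_ofReal_mul_I_im]
  have hker : ∀ i : ℕ, ∑ k ∈ Finset.range 5, c k * x0 (i + k) = 0 := by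
    intro i
    have h1 : ∑ k ∈ Finset.range 5, c k * x0 (i + k) =
        (Complex.exp (φ * Complex.I) * z ^ i * ∑ k ∈ Finset.range 5, (c k : ℂ) * z ^ k).im := by
      rw [Finset.mul_sum, Complex.im_sum]
      apply Finset.sum_congr rfl
      intro k _
      have : Complex.exp (φ * Complex.I) * z ^ i * ((c k : ℂ) * z ^ k) =
          (c k : ℂ) * (Complex.exp (φ * Complex.I) * z ^ (i + k)) := by
        rw [pow_add]; ring
      rw [this, Complex.im_ofReal_mul]
    rw [h1, hz, mul_zero, Complex.zero_im]
  set F := ∑ k ∈ Finset.range 5, c k * (-R) ^ k with hF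
  let w : ℕ → ℝ := fun j => (-R) ^ j / F
  have hw : ∀ i : ℕ, ∑ k ∈ Finset.range 5, c k * w (i + k) = (-R) ^ i := by
    intro i
    have : ∑ k ∈ Finset.range 5, c k * w (i + k) = (-R) ^ i / F * F := by
      rw [hF, Finset.mul_sum]
      apply Finset.sum_congr rfl
      intro k _
      simp only [w, pow_add, ← hF]
      ring
    rw [this, div_mul_cancel₀ _ hfR]
  let bn : ℕ → ℕ := fun j => ⌊(θ * j + φ) / Real.pi⌋₊
  have hnn : ∀ j : ℕ, 0 ≤ θ * j + φ := fun j => by positivity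
  have hbn : ∀ j : ℕ, j < K + 5 → bn j < K := by
    intro j hj
    have hj' : (j : ℝ) ≤ K + 4 := by exact_mod_cast (by omega : j ≤ K + 4)
    simp only [bn]
    rw [Nat.floor_lt (div_nonneg (hnn j) hpi.le), div_lt_iff₀ hpi]
    have := mul_le_mul_of_nonneg_left hj' hθ0.le
    linarith
  have hpos : ∀ j : ℕ, 0 < (-1 : ℝ) ^ bn j * x0 j := by
    intro j
    rw [hx0]
    have := mul_pos (pow_pos hr0 j) (sin_floor_sign _ (hnn j) (hφ j))
    simp only [bn]
    linarith
  obtain ⟨ε, hε0, hε⟩ : ∃ ε : ℝ, 0 < ε ∧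
      ∀ j : Fin (K + 5), 0 < (-1 : ℝ) ^ bn j * (x0 j + ε * w j) := by
    have hev : ∀ᶠ ε in nhdsWithin (0:ℝ) (Set.Ioi 0),
        ∀ j : Fin (K + 5), 0 < (-1 : ℝ) ^ bn j * (x0 j + ε * w j) := by
      rw [Filter.eventually_all]
      intro j
      apply Filter.Eventually.filter_mono nhdsWithin_le_nhds
      have hcont : Continuous (fun ε : ℝ => (-1 : ℝ) ^ bn j * (x0 j + ε * w j)) := by fun_prop
      have ht := hcont.tendsto 0
      apply ht.eventually_const_lt
      simpa using hpos j
    obtain ⟨ε, h1, h2⟩ := (hev.and self_mem_nhdsWithin).exists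
    exact ⟨ε, h2, h1⟩
  refine var_dim (k := K) (N := K + 5)
    (Matrix.of fun (i : Fin (K + 1)) (j : Fin (K + 5)) =>
      if (i : ℕ) ≤ (j : ℕ) then c ((j : ℕ) - (i : ℕ)) else 0) ?_
    (fun j => ⟨bn j, hbn j j.isLt⟩) ?_ (fun j => x0 j + ε * w j) (fun j => (hε j).le) ?_
  · intro n i j hi hj
    exact hc n (fun p => (i p : ℕ)) (fun q => (j q : ℕ)) (fun a b hab => hi hab)
      (fun a b hab => hj hab)
  · intro j j' hjj
    change bn j ≤ bn j'
    apply Nat.floor_le_floor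
    have : (j : ℝ) ≤ (j' : ℝ) := by exact_mod_cast hjj
    have := mul_le_mul_of_nonneg_left this hθ0.le
    apply div_le_div_of_nonneg_right _ hpi.le
    linarith
  · intro i
    simp only [Matrix.of_apply]
    rw [Fin.sum_univ_eq_sum_range (fun j : ℕ =>
      (if (i : ℕ) ≤ j then c (j - (i : ℕ)) else 0) * (x0 j + ε * w j)) (K + 5)]
    rw [toeplitz_root_sum c (fun j => x0 j + ε * w j) h5 K i (by omega)]
    have : ∑ k ∈ Finset.range 5, c k * (x0 (i + k) + ε * w (i + k)) = ε * (-R) ^ (i : ℕ) := by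
      rw [← hw i, Finset.mul_sum]
      have := hker i
      rw [← zero_add (∑ k ∈ Finset.range 5, ε * _), ← this, ← Finset.sum_add_distrib]
      exact Finset.sum_congr rfl (fun k _ => by ring)
    rw [this]
    have e : (-1 : ℝ) ^ (i : ℕ) * (ε * (-R) ^ (i : ℕ)) = ε * R ^ (i : ℕ) := by
      have : (-1 : ℝ) ^ (i : ℕ) * (-R) ^ (i : ℕ) = R ^ (i : ℕ) := by
        rw [← mul_pow]; congr 1; ring
      linear_combination ε * this
    rw [e]
    positivity

lemma asw (c : ℕ → ℝ) (hc : IsTotallyPositive c) (h5 : ∀ k, 5 ≤ k → c k = 0)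
    (h4 : 0 < c 4) (z : ℂ)
    (hz : ∑ k ∈ Finset.range 5, (c k : ℂ) * z ^ k = 0) : ∃ x : ℝ, z = (x : ℂ) := by
  obtain ⟨R, hR, hfR⟩ : ∃ R : ℝ, 0 < R ∧ ∑ k ∈ Finset.range 5, c k * (-R) ^ k ≠ 0 := by
    by_contra hcon
    push Not at hcon
    have h1 := hcon 1 (by norm_num)
    have h2 := hcon 2 (by norm_num)
    have h3 := hcon 3 (by norm_num)
    have h4' := hcon 4 (by norm_num)
    have h5' := hcon 5 (by norm_num)
    simp only [Finset.sum_range_succ, Finset.sum_range_zero] at h1 h2 h3 h4' h5'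
    norm_num at h1 h2 h3 h4' h5'
    linarith
  rcases lt_trichotomy z.im 0 with h | h | h
  · exfalso
    refine asw_upper c hc h5 R hR hfR (starRingEnd ℂ z) ?_ (by simpa using h)
    have := congrArg (starRingEnd ℂ) hz
    simpa [map_sum] using this
  · exact ⟨z.re, Complex.ext (by simp) (by simpa using h)⟩
  · exact (asw_upper c hc h5 R hR hfR z hz h).elim

lemma preserver_roots (a : ℕ → ℝ) (h5 : ∀ k, 5 ≤ k → a k = 0) (h4 : 0 < a 4)
    (hp : IsTPPreserver a) (s : ℕ) (hs : s ≤ 4) (z : ℂ)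
    (hz : ∑ k ∈ Finset.range 5, ((a k * (if s ≤ k then (1:ℝ) else 0) : ℝ) : ℂ) * z ^ k = 0) :
    ∃ x : ℝ, z = (x : ℂ) :=
  asw _ (hp _ (ones_tp s)) (fun k hk => by simp [h5 k hk]) (by simp [hs, h4]) z hz


/-- Multiplication of the generating function by `u + v z`. -/
lemma mul_lin_tp (c : ℕ → ℝ) (hc : IsTotallyPositive c) (u v : ℝ) (hu : 0 ≤ u) (hv : 0 ≤ v)
    (d : ℕ → ℝ) (h0 : d 0 = u * c 0) (hd : ∀ k, d (k + 1) = u * c (k + 1) + v * c k) :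
    IsTotallyPositive d := by
  intro n i j hi hj
  have e : (Matrix.of fun p q : Fin n => if i p ≤ j q then d (j q - i p) else 0).det =
      Matrix.detRowAlternating (R := ℝ) (n := Fin n)
        ((fun p => u • (fun q => if i p ≤ j q then c (j q - i p) else 0)) +
         (fun p => v • (fun q => if i p + 1 ≤ j q then c (j q - (i p + 1)) else 0))) := by
    change Matrix.det _ = Matrix.det _
    congr 1
    ext p q
    simp only [Matrix.of_apply, Pi.add_apply, Pi.smul_apply, smul_eq_mul]
    rcases lt_trichotomy (i p) (j q) with h | h | h
    · obtain ⟨k, hk⟩ : ∃ k, j q = i p + 1 + k := ⟨j q - (i p + 1), by omega⟩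
      have h1 : j q - i p = k + 1 := by omega
      have h2 : j q - (i p + 1) = k := by omega
      rw [if_pos h.le, if_pos h.le, if_pos (by omega), h1, h2, hd]
    · rw [if_pos h.le, if_pos h.le, if_neg (by omega), h, Nat.sub_self, h0]; ring
    · rw [if_neg (by omega), if_neg (by omega), if_neg (by omega)]; ring
  rw [e]
  have e2 := (Matrix.detRowAlternating (R := ℝ) (n := Fin n)).toMultilinearMap.map_add_univ
    (fun p => u • (fun q => if i p ≤ j q then c (j q - i p) else 0))
    (fun p => v • (fun q => if i p + 1 ≤ j q then c (j q - (i p + 1)) else 0))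
  simp only [AlternatingMap.coe_multilinearMap] at e2
  rw [e2]
  apply Finset.sum_nonneg
  intro s _
  let i' : Fin n → ℕ := fun p => if p ∈ s then i p else i p + 1
  have e3 : (s.piecewise (fun p => u • (fun q => if i p ≤ j q then c (j q - i p) else 0))
    (fun p => v • (fun q => if i p + 1 ≤ j q then c (j q - (i p + 1)) else 0)) : Fin n → Fin n → ℝ)
    = fun p => (if p ∈ s then u else v) • (fun q => if i' p ≤ j q then c (j q - i' p) else 0) := by
    funext p
    by_cases hp : p ∈ s
    · simp [hp, i']
    · simp [hp, i']
  rw [e3]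
  have e4 := (Matrix.detRowAlternating (R := ℝ) (n := Fin n)).toMultilinearMap.map_smul_univ
    (fun p => if p ∈ s then u else v) (fun p q => if i' p ≤ j q then c (j q - i' p) else 0)
  simp only [AlternatingMap.coe_multilinearMap] at e4
  rw [e4, smul_eq_mul]
  apply mul_nonneg
  · apply Finset.prod_nonneg
    intro p _
    split_ifs <;> assumption
  · by_cases hinj : Function.Injective i'
    · have hmono : StrictMono i' := by
        apply Monotone.strictMono_of_injective _ hinj
        intro a b hab
        rcases hab.eq_or_lt with rfl | hab
        · exact le_rfl
        · have := hi hab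
          simp only [i']
          split_ifs <;> omega
      exact hc n i' j hmono hj
    · obtain ⟨p, q, hpq, hne⟩ := Function.not_injective_iff.mp hinj
      have : Matrix.det (fun p q => if i' p ≤ j q then c (j q - i' p) else 0 : Matrix (Fin n) (Fin n) ℝ) = 0 := by
        apply Matrix.det_zero_of_row_eq hne
        funext r
        simp only [hpq]
      exact this.symm.le

/-- Five-term sequences. -/
def sq5 (c0 c1 c2 c3 c4 : ℝ) : ℕ → ℝ
  | 0 => c0
  | 1 => c1
  | 2 => c2
  | 3 => c3
  | 4 => c4
  | _ => 0

lemma tp_const (c : ℝ) (hc : 0 ≤ c) : IsTotallyPositive (sq5 c 0 0 0 0) := by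
  have hδ : IsTotallyPositive (sq5 1 0 0 0 0) := by
    -- determinant of a 0/1 matrix
    intro n
    induction n with
    | zero => intro i j _ _; simp
    | succ n ih =>
      intro i j hi hj
      have hent : ∀ p q : Fin (n+1), (if i p ≤ j q then sq5 1 0 0 0 0 (j q - i p) else 0)
          = if i p = j q then (1:ℝ) else 0 := by
        intro p q
        rcases lt_trichotomy (i p) (j q) with h | h | h
        · obtain ⟨k, hk⟩ : ∃ k, j q - i p = k + 1 := ⟨j q - i p - 1, by omega⟩
          rw [if_pos h.le, hk, if_neg h.ne]
          rcases k with _ | _ | _ | _ | _ <;> rfl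
        · rw [if_pos h.le, h, Nat.sub_self, if_pos rfl]; rfl
        · rw [if_neg (by omega), if_neg (by omega)]
      by_cases h0 : i 0 = j 0
      · rw [Matrix.det_succ_column_zero, Fin.sum_univ_succ]
        have hz : ∀ p : Fin n, ¬ (i p.succ = j 0) := fun p => by
          have := hi (Fin.succ_pos p); omega
        have := ih (fun p => i p.succ) (fun q => j q.succ)
          (fun a b hab => hi (Fin.succ_lt_succ_iff.mpr hab))
          (fun a b hab => hj (Fin.succ_lt_succ_iff.mpr hab))
        have hent' : ∀ p q : Fin n, (if i p.succ ≤ j q.succ then sq5 1 0 0 0 0 (j q.succ - i p.succ) else 0)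
          = if i p.succ = j q.succ then (1:ℝ) else 0 := fun p q => hent _ _
        simp only [hent'] at this
        simp only [Matrix.of_apply, hent, h0, hz, if_true, if_false]
        simp only [Fin.val_zero, pow_zero, mul_one, one_mul, mul_zero, zero_mul,
          Finset.sum_const_zero, add_zero]
        exact this
      · have hz : (Matrix.of fun p q : Fin (n+1) => if i p ≤ j q then sq5 1 0 0 0 0 (j q - i p) else 0).det = 0 := by
          by_cases hlt : i 0 < j 0
          · apply Matrix.det_eq_zero_of_row_eq_zero 0
            intro q
            have := hj.monotone (Fin.zero_le q)
            rw [Matrix.of_apply, hent, if_neg (by omega)]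
          · apply Matrix.det_eq_zero_of_column_eq_zero 0
            intro p
            have := hi.monotone (Fin.zero_le p)
            rw [Matrix.of_apply, hent, if_neg (by omega)]
        rw [hz]
  refine mul_lin_tp _ hδ c 0 hc le_rfl _ (by simp [sq5]) ?_
  intro k
  rcases k with _ | _ | _ | _ | _ <;> simp [sq5]

lemma tp_mul (c0 c1 c2 c3 u v : ℝ) (hu : 0 ≤ u) (hv : 0 ≤ v)
    (h : IsTotallyPositive (sq5 c0 c1 c2 c3 0)) :
    IsTotallyPositive (sq5 (u * c0) (u * c1 + v * c0) (u * c2 + v * c1) (u * c3 + v * c2)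
      (v * c3)) := by
  refine mul_lin_tp _ h u v hu hv _ (by simp [sq5]) ?_
  intro k
  rcases k with _ | _ | _ | _ | _ | _ <;> simp [sq5]

lemma tp_shift (c0 c1 c2 c3 : ℝ) (h : IsTotallyPositive (sq5 c0 c1 c2 c3 0)) :
    IsTotallyPositive (sq5 0 c0 c1 c2 c3) := by
  have := tp_mul c0 c1 c2 c3 0 1 le_rfl zero_le_one h
  simpa using this

lemma tp_lin_s3 (c0 c1 : ℝ) (h0 : 0 ≤ c0) (h1 : 0 ≤ c1) : IsTotallyPositive (sq5 c0 c1 0 0 0) := by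
  have := tp_mul 1 0 0 0 c0 c1 h0 h1 (tp_const 1 zero_le_one)
  simpa using this

/-- quadratic with a nonpositive value -/
lemma tp_quad (c0 c1 c2 : ℝ) (h0 : 0 ≤ c0) (h1 : 0 ≤ c1) (h2 : 0 < c2) (x : ℝ)
    (hx : c0 - c1 * x + c2 * x ^ 2 ≤ 0) : IsTotallyPositive (sq5 c0 c1 c2 0 0) := by
  have hD : 0 ≤ c1 ^ 2 - 4 * c2 * c0 := by nlinarith [sq_nonneg (2 * c2 * x - c1)]
  set D := Real.sqrt (c1 ^ 2 - 4 * c2 * c0) with hDd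
  have hDs : D ^ 2 = c1 ^ 2 - 4 * c2 * c0 := Real.sq_sqrt hD
  have hD0 : 0 ≤ D := Real.sqrt_nonneg _
  have hDc : D ≤ c1 := by
    apply Real.sqrt_le_iff.mpr ⟨h1, by nlinarith [mul_nonneg h2.le h0]⟩
  have := tp_mul ((c1 + D) / 2) c2 0 0 ((c1 - D) / (2 * c2)) 1
    (div_nonneg (by linarith) (by linarith)) zero_le_one (tp_lin_s3 _ _ (by linarith) h2.le)
  convert this using 2
  · field_simp; linarith
  · field_simp; ring
  · ring
  · ring
  · ring

lemma cont_root (f : ℝ → ℝ) (hf : Continuous f) (x M : ℝ) (hxM : x ≤ M) (h1 : f x ≤ 0)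
    (h2 : 0 ≤ f M) : ∃ r, x ≤ r ∧ f r = 0 := by
  obtain ⟨r, hr, hr2⟩ := intermediate_value_Icc hxM hf.continuousOn (show (0:ℝ) ∈ Set.Icc (f x) (f M) from ⟨h1, h2⟩)
  exact ⟨r, hr.1, hr2⟩

lemma large_point (A B C D E y : ℝ) (hA : 0 < A) :
    ∃ M, y ≤ M ∧ 0 ≤ A * M ^ 4 + B * M ^ 3 + C * M ^ 2 + D * M + E := by
  set S := |B| + |C| + |D| + |E| with hS
  refine ⟨max y (max 1 (S / A)), le_max_left _ _, ?_⟩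
  set M := max y (max 1 (S / A)) with hM
  have h1 : 1 ≤ M := le_trans (le_max_left _ _) (le_max_right _ _)
  have h2 : S ≤ A * M := by
    have : S / A ≤ M := le_trans (le_max_right _ _) (le_max_right _ _)
    rw [div_le_iff₀ hA] at this
    linarith
  have hM0 : 0 < M := by linarith
  have p1 : M ≤ M ^ 3 := by nlinarith [sq_nonneg (M - 1), sq_nonneg M]
  have p2 : M ^ 2 ≤ M ^ 3 := by nlinarith [sq_nonneg M]
  have p3 : 1 ≤ M ^ 3 := by linarith
  have q1 : -(|B| * M ^ 3) ≤ B * M ^ 3 := by nlinarith [neg_abs_le B]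
  have q2 : -(|C| * M ^ 3) ≤ C * M ^ 2 := by
    nlinarith [neg_abs_le C, abs_nonneg C, sq_nonneg M]
  have q3 : -(|D| * M ^ 3) ≤ D * M := by nlinarith [neg_abs_le D, abs_nonneg D]
  have q4 : -(|E| * M ^ 3) ≤ E := by nlinarith [neg_abs_le E, abs_nonneg E]
  have q5 : S * M ^ 3 ≤ A * M ^ 4 := by
    have := mul_le_mul_of_nonneg_right h2 (by linarith : 0 ≤ M ^ 3)
    linarith [this, (by ring : A * M * M ^ 3 = A * M ^ 4)]
  rw [hS] at q5
  linarith

/-- cubic -/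
lemma tp_cubic (c0 c1 c2 c3 : ℝ) (h0 : 0 ≤ c0) (h3 : 0 < c3)
    (x y : ℝ) (hx0 : 0 < x) (hxy : x < y)
    (hx : c0 - c1 * x + c2 * x ^ 2 - c3 * x ^ 3 ≤ 0)
    (hy : 0 ≤ c0 - c1 * y + c2 * y ^ 2 - c3 * y ^ 3) :
    IsTotallyPositive (sq5 c0 c1 c2 c3 0) := by
  obtain ⟨M, hM, hM2⟩ := large_point c3 (-c2) c1 (-c0) 0 (max y 1) h3
  have hM1 : 1 ≤ M := le_trans (le_max_right _ _) hM
  have hM3 : 0 ≤ c3 * M ^ 3 - c2 * M ^ 2 + c1 * M - c0 := by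
    by_contra hcon
    push Not at hcon
    have : M * (c3 * M ^ 3 - c2 * M ^ 2 + c1 * M - c0) < 0 :=
      mul_neg_of_pos_of_neg (by linarith) hcon
    linarith
  obtain ⟨ρ, hρy, hρ⟩ := cont_root (fun t => c3 * t ^ 3 - c2 * t ^ 2 + c1 * t - c0)
    (by fun_prop) y M (le_trans (le_max_left _ _) hM) (by linarith) hM3
  have hρ0 : 0 < ρ := by linarith
  set q1 := c2 - c3 * ρ with hq1
  set q0 := c1 - ρ * q1 with hq0
  have e0 : ρ * q0 = c0 := by rw [hq0, hq1]; linarith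
  have hq0n : 0 ≤ q0 := by
    by_contra hcon; push Not at hcon
    have := mul_neg_of_pos_of_neg hρ0 hcon
    linarith
  have hh : q0 - q1 * x + c3 * x ^ 2 ≤ 0 := by
    by_contra hcon; push Not at hcon
    have h1 : 0 < (ρ - x) * (q0 - q1 * x + c3 * x ^ 2) := mul_pos (by linarith) hcon
    have h2 : (ρ - x) * (q0 - q1 * x + c3 * x ^ 2) = c0 - c1 * x + c2 * x ^ 2 - c3 * x ^ 3 := by
      rw [← e0, hq0, hq1]; ring
    linarith
  have hq1n : 0 ≤ q1 := by
    by_contra hcon; push Not at hcon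
    nlinarith [mul_pos h3 (pow_pos hx0 2)]
  have := tp_mul q0 q1 c3 0 ρ 1 hρ0.le zero_le_one (tp_quad q0 q1 c3 hq0n hq1n h3 x hh)
  convert this using 2
  · linarith
  · rw [hq0]; ring
  · rw [hq1]; ring
  · ring
  · ring

/-- quartic -/
lemma tp_quartic (c0 c1 c2 c3 c4 : ℝ) (h0 : 0 ≤ c0) (h4 : 0 < c4)
    (x y w : ℝ) (hx0 : 0 < x) (hxy : x < y) (hyw : y < w)
    (hx : c0 - c1 * x + c2 * x ^ 2 - c3 * x ^ 3 + c4 * x ^ 4 ≤ 0)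
    (hy : 0 ≤ c0 - c1 * y + c2 * y ^ 2 - c3 * y ^ 3 + c4 * y ^ 4)
    (hw : c0 - c1 * w + c2 * w ^ 2 - c3 * w ^ 3 + c4 * w ^ 4 ≤ 0) :
    IsTotallyPositive (sq5 c0 c1 c2 c3 c4) := by
  obtain ⟨M, hM, hM2⟩ := large_point c4 (-c3) c2 (-c1) c0 w h4
  obtain ⟨ρ, hρy, hρ⟩ := cont_root (fun t => c4 * t ^ 4 - c3 * t ^ 3 + c2 * t ^ 2 - c1 * t + c0)
    (by fun_prop) w M hM (by linarith) (by linarith)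
  have hρ0 : 0 < ρ := by linarith
  set q2 := c3 - c4 * ρ with hq2
  set q1 := c2 - ρ * q2 with hq1
  set q0 := c1 - ρ * q1 with hq0
  have e0 : ρ * q0 = c0 := by rw [hq0, hq1, hq2]; linarith
  have hq0n : 0 ≤ q0 := by
    by_contra hcon; push Not at hcon
    have := mul_neg_of_pos_of_neg hρ0 hcon
    linarith
  have key : ∀ t, (ρ - t) * (q0 - q1 * t + q2 * t ^ 2 - c4 * t ^ 3) =
      c0 - c1 * t + c2 * t ^ 2 - c3 * t ^ 3 + c4 * t ^ 4 := by
    intro t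
    rw [← e0, hq0, hq1, hq2]; ring
  have hgx : q0 - q1 * x + q2 * x ^ 2 - c4 * x ^ 3 ≤ 0 := by
    by_contra hcon; push Not at hcon
    have h1 := mul_pos (by linarith : 0 < ρ - x) hcon
    rw [key] at h1
    linarith
  have hgy : 0 ≤ q0 - q1 * y + q2 * y ^ 2 - c4 * y ^ 3 := by
    by_contra hcon; push Not at hcon
    have h1 := mul_neg_of_pos_of_neg (by linarith : 0 < ρ - y) hcon
    rw [key] at h1
    linarith
  have := tp_mul q0 q1 q2 c4 ρ 1 hρ0.le zero_le_one
    (tp_cubic q0 q1 q2 c4 hq0n h4 x y hx0 hxy hgx hgy)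
  convert this using 2
  · linarith
  · rw [hq0]; ring
  · rw [hq1]; ring
  · rw [hq2]; ring
  · ring


open Polynomial in
lemma exists_root_of_deg4 (a b c d e : ℂ) (h : e ≠ 0) :
    ∃ z : ℂ, a + b * z + c * z ^ 2 + d * z ^ 3 + e * z ^ 4 = 0 := by
  have hd : (C e * X ^ 4 + C d * X ^ 3 + C c * X ^ 2 + C b * X + C a : ℂ[X]).natDegree = 4 := by
    compute_degree!
  obtain ⟨z, hz⟩ := Complex.exists_root (f := C e * X ^ 4 + C d * X ^ 3 + C c * X ^ 2 + C b * X + C a)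
    (natDegree_pos_iff_degree_pos.mp (by rw [hd]; norm_num))
  refine ⟨z, ?_⟩
  simp [IsRoot] at hz
  linear_combination hz

open Polynomial in
lemma exists_root_of_deg3 (a b c d : ℂ) (h : d ≠ 0) :
    ∃ z : ℂ, a + b * z + c * z ^ 2 + d * z ^ 3 = 0 := by
  have hd : (C d * X ^ 3 + C c * X ^ 2 + C b * X + C a : ℂ[X]).natDegree = 3 := by
    compute_degree!
  obtain ⟨z, hz⟩ := Complex.exists_root (f := C d * X ^ 3 + C c * X ^ 2 + C b * X + C a)
    (natDegree_pos_iff_degree_pos.mp (by rw [hd]; norm_num))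
  refine ⟨z, ?_⟩
  simp [IsRoot] at hz
  linear_combination hz

open Polynomial in
lemma exists_root_of_deg2 (a b c : ℂ) (h : c ≠ 0) :
    ∃ z : ℂ, a + b * z + c * z ^ 2 = 0 := by
  have hd : (C c * X ^ 2 + C b * X + C a : ℂ[X]).natDegree = 2 := by
    compute_degree!
  obtain ⟨z, hz⟩ := Complex.exists_root (f := C c * X ^ 2 + C b * X + C a)
    (natDegree_pos_iff_degree_pos.mp (by rw [hd]; norm_num))
  refine ⟨z, ?_⟩
  simp [IsRoot] at hz
  linear_combination hz

/-- Factorisations, written with roots `-r`, `-s`, .... -/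
lemma factor2 (a b c : ℝ) (hc : c ≠ 0)
    (h : ∀ z : ℂ, (a : ℂ) + b * z + c * z ^ 2 = 0 → ∃ x : ℝ, z = x) :
    ∃ r s : ℝ, a = c * (r * s) ∧ b = c * (r + s) := by
  obtain ⟨z, hz⟩ := exists_root_of_deg2 a b c (by exact_mod_cast hc)
  obtain ⟨x, rfl⟩ := h z hz
  have hx : a + b * x + c * x ^ 2 = 0 := by exact_mod_cast hz
  refine ⟨-x, b / c + x, ?_, ?_⟩
  · field_simp; linarith
  · field_simp; ring

lemma factor3 (a b c d : ℝ) (hd : d ≠ 0)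
    (h : ∀ z : ℂ, (a : ℂ) + b * z + c * z ^ 2 + d * z ^ 3 = 0 → ∃ x : ℝ, z = x) :
    ∃ r s t : ℝ, a = d * (r * s * t) ∧ b = d * (r * s + r * t + s * t) ∧ c = d * (r + s + t) := by
  obtain ⟨z, hz⟩ := exists_root_of_deg3 a b c d (by exact_mod_cast hd)
  obtain ⟨x, rfl⟩ := h z hz
  have hx : a + b * x + c * x ^ 2 + d * x ^ 3 = 0 := by exact_mod_cast hz
  obtain ⟨s, t, h1, h2⟩ := factor2 (b + x * (c + d * x)) (c + d * x) d hd (by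
    intro w hw
    apply h w
    have hx' : (a : ℂ) + b * x + c * x ^ 2 + d * x ^ 3 = 0 := by exact_mod_cast hx
    push_cast at hw
    linear_combination (w - x) * hw + hx')
  have h3 : c = d * (-x + s + t) := by linear_combination h2
  have h4 : b = d * (-x * s + -x * t + s * t) := by linear_combination h1 - x * h2
  refine ⟨-x, s, t, ?_, h4, h3⟩
  linear_combination hx - x * h1

lemma factor4 (a b c d e : ℝ) (he : e ≠ 0)
    (h : ∀ z : ℂ, (a : ℂ) + b * z + c * z ^ 2 + d * z ^ 3 + e * z ^ 4 = 0 → ∃ x : ℝ, z = x) :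
    ∃ r s t u : ℝ, a = e * (r * s * t * u) ∧
      b = e * (r * s * t + r * s * u + r * t * u + s * t * u) ∧
      c = e * (r * s + r * t + r * u + s * t + s * u + t * u) ∧ d = e * (r + s + t + u) := by
  obtain ⟨z, hz⟩ := exists_root_of_deg4 a b c d e (by exact_mod_cast he)
  obtain ⟨x, rfl⟩ := h z hz
  have hx : a + b * x + c * x ^ 2 + d * x ^ 3 + e * x ^ 4 = 0 := by exact_mod_cast hz
  obtain ⟨s, t, u, h1, h2, h3⟩ := factor3 (b + x * (c + x * (d + e * x))) (c + x * (d + e * x))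
    (d + e * x) e he (by
    intro w hw
    apply h w
    have hx' : (a : ℂ) + b * x + c * x ^ 2 + d * x ^ 3 + e * x ^ 4 = 0 := by exact_mod_cast hx
    push_cast at hw
    linear_combination (w - x) * hw + hx')
  refine ⟨-x, s, t, u, ?_, ?_, ?_, ?_⟩
  · linear_combination hx - x * h1
  · linear_combination h1 - x * h2
  · linear_combination h2 - x * h3
  · linear_combination h3


lemma sort3 (x y z : ℝ) : ∃ s1 s2 s3 : ℝ, s1 ≤ s2 ∧ s2 ≤ s3 ∧ x + y + z = s1 + s2 + s3 ∧
    x * y + x * z + y * z = s1 * s2 + s1 * s3 + s2 * s3 ∧ x * y * z = s1 * s2 * s3 := by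
  rcases le_total x y with h1 | h1 <;> rcases le_total y z with h2 | h2 <;>
    rcases le_total x z with h3 | h3
  · exact ⟨x, y, z, h1, h2, by ring, by ring, by ring⟩
  · exact ⟨x, y, z, h1, h2, by ring, by ring, by ring⟩
  · exact ⟨x, z, y, h3, h2, by ring, by ring, by ring⟩
  · exact ⟨z, x, y, h3, h1, by ring, by ring, by ring⟩
  · exact ⟨y, x, z, h1, h3, by ring, by ring, by ring⟩
  · exact ⟨y, z, x, h2, h3, by ring, by ring, by ring⟩
  · exact ⟨z, y, x, h2, h1, by ring, by ring, by ring⟩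
  · exact ⟨z, y, x, h2, h1, by ring, by ring, by ring⟩

set_option maxHeartbeats 1000000 in
lemma base (a0 a1 a2 a3 a4 : ℝ) (p0 : 0 < a0) (p1 : 0 < a1) (p2 : 0 < a2) (p3 : 0 < a3)
    (p4 : 0 < a4)
    (h4 : ∀ z : ℂ, (a0 : ℂ) + a1 * z + a2 * z ^ 2 + a3 * z ^ 3 + a4 * z ^ 4 = 0 → ∃ x : ℝ, z = x)
    (h3 : ∀ z : ℂ, (a1 : ℂ) + a2 * z + a3 * z ^ 2 + a4 * z ^ 3 = 0 → ∃ x : ℝ, z = x)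
    (h2 : ∀ z : ℂ, (a2 : ℂ) + a3 * z + a4 * z ^ 2 = 0 → ∃ x : ℝ, z = x) :
    4 * a2 * a4 ≤ a3 ^ 2 ∧ 2 * a0 * a4 ≤ a1 * a3 ∧
    ∃ m s : ℝ, 0 < m ∧ m < s ∧ a0 - a1 * m + a2 * m ^ 2 - a3 * m ^ 3 + a4 * m ^ 4 ≤ 0 ∧
      2 * a3 * m ≤ a2 ∧ -a1 + a2 * s - a3 * s ^ 2 + a4 * s ^ 3 = 0 ∧ 3 * a4 * s ≤ a3 := by
  obtain ⟨r, s, t, u, f0, f1, f2, f3⟩ := factor4 a0 a1 a2 a3 a4 p4.ne' h4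
  obtain ⟨x, y, z, g1, g2, g3⟩ := factor3 a1 a2 a3 a4 p4.ne' h3
  obtain ⟨v, w, k2, k3⟩ := factor2 a2 a3 a4 p4.ne' h2
  have key : ∀ q, a0 - a1 * q + a2 * q ^ 2 - a3 * q ^ 3 + a4 * q ^ 4 =
      a4 * ((r - q) * (s - q) * (t - q) * (u - q)) := by
    intro q; rw [f0, f1, f2, f3]; ring
  have posr : ∀ q, a0 - a1 * q + a2 * q ^ 2 - a3 * q ^ 3 + a4 * q ^ 4 = 0 → 0 < q := by
    intro q hq
    by_contra hcon
    push Not at hcon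
    have e1 : 0 ≤ a1 * (-q) := mul_nonneg p1.le (by linarith)
    have e2 : 0 ≤ a2 * (-q) ^ 2 := by positivity
    have e3 : 0 ≤ a3 * (-q) ^ 3 := mul_nonneg p3.le (pow_nonneg (by linarith) 3)
    have e4 : 0 ≤ a4 * (-q) ^ 4 := mul_nonneg p4.le (pow_nonneg (by linarith) 4)
    nlinarith
  have hr := posr r (by rw [key]; ring)
  have hs := posr s (by rw [key]; ring)
  have ht := posr t (by rw [key]; ring)
  have hu := posr u (by rw [key]; ring)
  obtain ⟨s1, s2, s3, o12, o23, q3, q2, q1⟩ := sort3 x y z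
  rw [q1] at g1; rw [q2] at g2; rw [q3] at g3
  have keyC : ∀ q, -a1 + a2 * q - a3 * q ^ 2 + a4 * q ^ 3 =
      a4 * ((q - s1) * (q - s2) * (q - s3)) := by
    intro q; rw [g1, g2, g3]; ring
  have posS : ∀ q, -a1 + a2 * q - a3 * q ^ 2 + a4 * q ^ 3 = 0 → 0 < q := by
    intro q hq
    by_contra hcon
    push Not at hcon
    have e1 : 0 ≤ a2 * (-q) := mul_nonneg p2.le (by linarith)
    have e2 : 0 ≤ a3 * (-q) ^ 2 := by positivity
    have e3 : 0 ≤ a4 * (-q) ^ 3 := mul_nonneg p4.le (pow_nonneg (by linarith) 3)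
    nlinarith
  have hs1 := posS s1 (by rw [keyC]; ring)
  have hs2 : 0 < s2 := by linarith
  have key2 : ∀ q, a0 - a1 * q + a2 * q ^ 2 - a3 * q ^ 3 + a4 * q ^ 4 =
      a0 - a4 * (q * (s1 - q) * ((s2 - q) * (s3 - q))) := by
    intro q; linear_combination q * keyC q
  refine ⟨?_, ?_, ?_⟩
  · rw [k2, k3]
    nlinarith [mul_nonneg (sq_nonneg a4) (sq_nonneg (v - w))]
  · rw [f0, f1, f3]
    have : 0 ≤ a4 ^ 2 * ((r * s * t + r * s * u + r * t * u + s * t * u) * (r + s + t + u)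
        - 2 * (r * s * t * u)) := by
      apply mul_nonneg (by positivity)
      have : (r * s * t + r * s * u + r * t * u + s * t * u) * (r + s + t + u)
        - 2 * (r * s * t * u) = 2 * (r * s * t * u) + r * s * t * (r + s + t)
          + r * s * u * (r + s + u) + r * t * u * (r + t + u) + s * t * u * (s + t + u) := by ring
      rw [this]; positivity
    linarith
  -- a root of the quartic below s2
  obtain ⟨R, hR0, hRs2, hR⟩ : ∃ R, 0 < R ∧ R ≤ s2 ∧
      a0 - a1 * R + a2 * R ^ 2 - a3 * R ^ 3 + a4 * R ^ 4 = 0 := by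
    by_contra hcon
    push Not at hcon
    have nr : s2 < r := by
      by_contra h; exact hcon r hr (not_lt.mp h) (by rw [key]; ring)
    have ns : s2 < s := by
      by_contra h; exact hcon s hs (not_lt.mp h) (by rw [key]; ring)
    have nt : s2 < t := by
      by_contra h; exact hcon t ht (not_lt.mp h) (by rw [key]; ring)
    have nu : s2 < u := by
      by_contra h; exact hcon u hu (not_lt.mp h) (by rw [key]; ring)
    have e1 : a0 = a4 * ((r - s2) * (s - s2) * (t - s2) * (u - s2)) := by
      rw [← key, key2]; ring
    have e2 : (r - s2) * (s - s2) * (t - s2) * (u - s2) = r * s * t * u := by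
      have : a4 * ((r - s2) * (s - s2) * (t - s2) * (u - s2)) = a4 * (r * s * t * u) := by
        rw [← e1, ← f0]
      exact mul_left_cancel₀ p4.ne' this
    have e3 : (r - s2) * (s - s2) * (t - s2) * (u - s2) < r * s * t * u := by
      have b1 : 0 < r - s2 := by linarith
      have b2 : 0 < s - s2 := by linarith
      have b3 : 0 < t - s2 := by linarith
      have b4 : 0 < u - s2 := by linarith
      gcongr <;> linarith
    linarith
  have hRs1 : R < s1 := by
    by_contra hcon
    push Not at hcon
    rw [key2] at hR
    have : 0 ≤ R * (R - s1) * ((s2 - R) * (s3 - R)) := by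
      apply mul_nonneg (mul_nonneg hR0.le (by linarith)) (mul_nonneg (by linarith) (by linarith))
    nlinarith [mul_nonneg p4.le this]
  have hfin : ∀ m, 0 < m → 2 * m ≤ s1 →
      a0 - a1 * m + a2 * m ^ 2 - a3 * m ^ 3 + a4 * m ^ 4 ≤ 0 → ∃ m s : ℝ, 0 < m ∧ m < s ∧
      a0 - a1 * m + a2 * m ^ 2 - a3 * m ^ 3 + a4 * m ^ 4 ≤ 0 ∧
      2 * a3 * m ≤ a2 ∧ -a1 + a2 * s - a3 * s ^ 2 + a4 * s ^ 3 = 0 ∧ 3 * a4 * s ≤ a3 := by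
    intro m hm hms hle
    refine ⟨m, s1, hm, by linarith, hle, ?_, by rw [keyC]; ring, ?_⟩
    · rw [g2, g3]
      have : 2 * m * (s1 + s2 + s3) ≤ s1 * s2 + s1 * s3 + s2 * s3 := by
        have h1 : 2 * m * (s1 + s2 + s3) ≤ s1 * (s1 + s2 + s3) :=
          mul_le_mul_of_nonneg_right hms (by linarith)
        have h2 : s1 * s1 ≤ s2 * s3 := mul_le_mul o12 (by linarith) hs1.le hs2.le
        linarith
      have := mul_le_mul_of_nonneg_left this p4.le
      linarith
    · have := mul_le_mul_of_nonneg_left (by linarith : 3 * s1 ≤ s1 + s2 + s3) p4.le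
      rw [g3]
      linarith
  rcases le_total (2 * R) s1 with hc | hc
  · exact hfin R hR0 hc hR.le
  · refine hfin (s1 - R) (by linarith) (by linarith) ?_
    rw [key2] at hR ⊢
    have h1 : (s2 - R) * (s3 - R) ≤ (s2 - (s1 - R)) * (s3 - (s1 - R)) :=
      mul_le_mul (by linarith) (by linarith) (by linarith) (by linarith)
    have h2 : 0 ≤ R * (s1 - R) := mul_nonneg hR0.le (by linarith)
    have h3 := mul_le_mul_of_nonneg_left (mul_le_mul_of_nonneg_left h1 h2) p4.le
    have h4 : (s1 - R) * (s1 - (s1 - R)) = R * (s1 - R) := by ring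
    rw [h4]
    linarith


lemma minor2 (b : ℕ → ℝ) (h : IsMultiplyPositive 4 b) (k l : ℕ) (hkl : k < l) :
    b k * b (l + 1) ≤ b (k + 1) * b l := by
  have := h 2 (by norm_num) ![0, 1] ![k + 1, l + 1]
    (by rw [Fin.strictMono_iff_lt_succ]; intro i; fin_cases i; simp)
    (by rw [Fin.strictMono_iff_lt_succ]; intro i; fin_cases i; simp; omega)
  rw [Matrix.det_fin_two] at this
  simp at this
  linarith

lemma mono3 (p q r : ℕ) (h1 : p < q) (h2 : q < r) : StrictMono ![p, q, r] := by
  rw [Fin.strictMono_iff_lt_succ]; intro i; fin_cases i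
  · simpa using h1
  · simpa using h2

lemma minors3 (b : ℕ → ℝ) (h : IsMultiplyPositive 4 b) :
    0 ≤ b 1 ^ 3 - 2 * b 0 * b 1 * b 2 + b 0 ^ 2 * b 3 ∧
    0 ≤ b 2 * (b 1 ^ 2 - b 0 * b 2) - b 3 * b 0 * b 1 + b 4 * b 0 ^ 2 ∧
    0 ≤ b 2 * (b 2 ^ 2 - b 1 * b 3) - b 3 * (b 1 * b 2 - b 0 * b 3)
      + b 4 * (b 1 ^ 2 - b 0 * b 2) := by
  have h1 := h 3 (by norm_num) ![0, 1, 2] ![1, 2, 3] (mono3 _ _ _ (by norm_num) (by norm_num))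
    (mono3 _ _ _ (by norm_num) (by norm_num))
  have h2 := h 3 (by norm_num) ![0, 2, 3] ![2, 3, 4] (mono3 _ _ _ (by norm_num) (by norm_num))
    (mono3 _ _ _ (by norm_num) (by norm_num))
  have h3 := h 3 (by norm_num) ![0, 1, 2] ![2, 3, 4] (mono3 _ _ _ (by norm_num) (by norm_num))
    (mono3 _ _ _ (by norm_num) (by norm_num))
  rw [Matrix.det_fin_three] at h1 h2 h3
  simp at h1 h2 h3
  refine ⟨by linarith, by linarith, by linarith⟩

lemma nonneg_of_tp (b : ℕ → ℝ) (h : IsMultiplyPositive 4 b) (k : ℕ) : 0 ≤ b k := by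
  have := h 1 (by norm_num) ![0] ![k] (by intro a b hab; omega) (by intro a b hab; omega)
  simpa using this

lemma scale_eval (a0 a1 a2 a3 a4 g k B0 B1 B2 B3 B4 y : ℝ) (hk : k ≠ 0) :
    a0 * (g * B0) - a1 * (g * B1 * k) * (y / k) + a2 * (g * B2 * k ^ 2) * (y / k) ^ 2
      - a3 * (g * B3 * k ^ 3) * (y / k) ^ 3 + a4 * (g * B4 * k ^ 4) * (y / k) ^ 4 =
    g * (a0 * B0 - a1 * B1 * y + a2 * B2 * y ^ 2 - a3 * B3 * y ^ 3 + a4 * B4 * y ^ 4) := by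
  field_simp

lemma exists_scale (b0 b1 b2 b3 b4 g k : ℝ) (hg : g ≠ 0) (hk : k ≠ 0) :
    ∃ B0 B1 B2 B3 B4, b0 = g * B0 ∧ b1 = g * B1 * k ∧ b2 = g * B2 * k ^ 2 ∧
      b3 = g * B3 * k ^ 3 ∧ b4 = g * B4 * k ^ 4 := by
  refine ⟨b0 / g, b1 / (g * k), b2 / (g * k ^ 2), b3 / (g * k ^ 3), b4 / (g * k ^ 4), ?_, ?_, ?_, ?_, ?_⟩ <;>
    field_simp

lemma point1 (a0 a1 a2 a3 a4 b0 b1 b2 b3 b4 m : ℝ) (p2 : 0 < a2) (p3 : 0 < a3) (p4 : 0 < a4)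
    (hb0 : 0 < b0) (hb1 : 0 < b1) (h02 : b0 * b2 ≤ b1 * b1) (h03 : b0 * b3 ≤ b1 * b2)
    (h04 : b0 * b4 ≤ b1 * b3) (he : 0 ≤ b1 ^ 3 - 2 * b0 * b1 * b2 + b0 ^ 2 * b3)
    (hm : 0 < m) (hq : a0 - a1 * m + a2 * m ^ 2 - a3 * m ^ 3 + a4 * m ^ 4 ≤ 0)
    (hm2 : 2 * a3 * m ≤ a2) (X : ℝ) (hX : X = m / (b1 / b0)) :
    a0 * b0 - a1 * b1 * X + a2 * b2 * X ^ 2 - a3 * b3 * X ^ 3 + a4 * b4 * X ^ 4 ≤ 0 := by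
  set k := b1 / b0 with hk
  have hk0 : 0 < k := div_pos hb1 hb0
  have hb1k : b1 = b0 * k := by rw [hk]; field_simp
  clear_value k
  obtain ⟨B0, B1, B2, B3, B4, e0, e1, e2, e3, e4⟩ :=
    exists_scale b0 b1 b2 b3 b4 b0 k hb0.ne' hk0.ne'
  obtain rfl : B0 = 1 := by
    apply mul_left_cancel₀ hb0.ne'; linarith
  obtain rfl : B1 = 1 := by
    apply mul_left_cancel₀ (mul_pos hb0 hk0).ne'; linarith
  have s2 : B2 ≤ 1 := by
    have hp : 0 < b0 ^ 2 * k ^ 2 := by positivity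
    rw [e2, hb1k] at h02
    refine le_of_mul_le_mul_left ?_ hp
    linarith
  have s3 : B3 ≤ B2 := by
    have hp : 0 < b0 ^ 2 * k ^ 3 := by positivity
    rw [e3, e2, hb1k] at h03
    refine le_of_mul_le_mul_left ?_ hp
    linarith
  have s4 : B4 ≤ B3 := by
    have hp : 0 < b0 ^ 2 * k ^ 4 := by positivity
    rw [e4, e3, hb1k] at h04
    refine le_of_mul_le_mul_left ?_ hp
    linarith
  have s5 : 2 * B2 - 1 ≤ B3 := by
    have hp : 0 < b0 ^ 3 * k ^ 3 := by positivity
    rw [e3, e2, hb1k] at he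
    refine le_of_mul_le_mul_left ?_ hp
    linarith
  have ev := scale_eval a0 a1 a2 a3 a4 b0 k 1 1 B2 B3 B4 m hk0.ne'
  rw [← e1, ← e2, ← e3, ← e4, ← hX, mul_one b0] at ev
  rw [ev]
  apply mul_nonpos_of_nonneg_of_nonpos hb0.le
  have t1 : 0 ≤ (1 - B2) * m ^ 2 * (a2 - 2 * a3 * m) :=
    mul_nonneg (mul_nonneg (by linarith) (by positivity)) (by linarith)
  have t2 : 0 ≤ (B3 - (2 * B2 - 1)) * (a3 * m ^ 3) := mul_nonneg (by linarith) (by positivity)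
  have t3 : 0 ≤ (1 - B4) * (a4 * m ^ 4) := mul_nonneg (by linarith) (by positivity)
  linarith

lemma key_b4 (β B3 B4 : ℝ) (n0 : 0 ≤ β) (s0 : β ≤ 1) (n3 : 0 ≤ B3) (s3 : B3 ≤ 1)
    (t1 : 0 ≤ 1 - 2 * β + β ^ 2 * B3) (t2 : 0 ≤ (1 - β) - β * B3 + β ^ 2 * B4)
    (t3 : 0 ≤ (1 - 2 * B3) + β * B3 ^ 2 + B4 * (1 - β)) :
    1 - B4 ≤ 3 * (1 - B3) := by
  obtain ⟨τ, hτ⟩ : ∃ τ, τ = 1 - B3 := ⟨_, rfl⟩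
  have hB3 : B3 = 1 - τ := by linarith
  subst hB3
  clear hτ
  rcases s0.eq_or_lt with h1 | h1
  · subst h1
    have : τ = 0 := by linarith
    subst this
    linarith
  · have u1 : β * τ ≤ 1 - β := by
      rcases le_total β (1 / 2) with h2 | h2
      · have : β * τ ≤ β * 1 := mul_le_mul_of_nonneg_left (by linarith) n0
        linarith
      · by_contra hcon
        push Not at hcon
        have h3 := mul_lt_mul_of_pos_left hcon (by linarith : 0 < β)
        have h4 : 0 ≤ (2 * β - 1) * (1 - β) := mul_nonneg (by linarith) (by linarith)
        linarith
    have u2 : β * τ * τ ≤ (1 - β) * τ := mul_le_mul_of_nonneg_right u1 (by linarith)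
    have u3 : 0 ≤ (1 - β) * (B4 - 1 + 3 * τ) := by linarith
    have := nonneg_of_mul_nonneg_right u3 (by linarith)
    linarith

lemma point2 (a0 a1 a2 a3 a4 b0 b1 b2 b3 b4 y : ℝ) (p0 : 0 < a0) (p3 : 0 < a3) (p4 : 0 < a4)
    (hb0 : 0 ≤ b0) (hb1 : 0 < b1) (hb2 : 0 < b2) (hb3 : 0 ≤ b3)
    (h02 : b0 * b2 ≤ b1 * b1) (h13 : b1 * b3 ≤ b2 * b2)
    (he : 0 ≤ b1 ^ 3 - 2 * b0 * b1 * b2 + b0 ^ 2 * b3)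
    (hs1 : 0 ≤ b2 * (b1 ^ 2 - b0 * b2) - b3 * b0 * b1 + b4 * b0 ^ 2)
    (hs2 : 0 ≤ b2 * (b2 ^ 2 - b1 * b3) - b3 * (b1 * b2 - b0 * b3)
      + b4 * (b1 ^ 2 - b0 * b2))
    (hy : 0 < y) (hq : -a1 + a2 * y - a3 * y ^ 2 + a4 * y ^ 3 = 0)
    (hy2 : 3 * a4 * y ≤ a3) (X : ℝ) (hX : X = y / (b2 / b1)) :
    0 ≤ a0 * b0 - a1 * b1 * X + a2 * b2 * X ^ 2 - a3 * b3 * X ^ 3 + a4 * b4 * X ^ 4 := by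
  set k := b2 / b1 with hk
  have hk0 : 0 < k := div_pos hb2 hb1
  obtain ⟨g, hg⟩ : ∃ g, g = b1 / k := ⟨_, rfl⟩
  have hg0 : 0 < g := by rw [hg]; positivity
  have hb1k : b1 = g * k := by rw [hg]; field_simp
  have hb2k : b2 = g * k ^ 2 := by
    have : b2 = b1 * k := by rw [hk]; field_simp
    rw [this, hb1k]; ring
  clear_value k
  clear hg hk
  obtain ⟨B0, B1, B2, B3, B4, e0, e1, e2, e3, e4⟩ :=
    exists_scale b0 b1 b2 b3 b4 g k hg0.ne' hk0.ne'
  obtain rfl : B1 = 1 := by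
    apply mul_left_cancel₀ (mul_pos hg0 hk0).ne'; linarith
  obtain rfl : B2 = 1 := by
    apply mul_left_cancel₀ (mul_pos hg0 (pow_pos hk0 2)).ne'; linarith
  have ev := scale_eval a0 a1 a2 a3 a4 g k B0 1 1 B3 B4 y hk0.ne'
  rw [← e0, ← e1, ← e2, ← e3, ← e4, ← hX] at ev
  have n0 : 0 ≤ B0 := by
    rw [e0] at hb0; exact nonneg_of_mul_nonneg_right hb0 hg0
  have n3 : 0 ≤ B3 := by
    have hp : 0 < g * k ^ 3 := by positivity
    rw [e3] at hb3
    refine nonneg_of_mul_nonneg_right (a := g * k ^ 3) ?_ hp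
    linarith
  have s0 : B0 ≤ 1 := by
    have hp : 0 < g ^ 2 * k ^ 2 := by positivity
    rw [e0, hb1k, hb2k] at h02
    refine le_of_mul_le_mul_left ?_ hp
    linarith
  have s3 : B3 ≤ 1 := by
    have hp : 0 < g ^ 2 * k ^ 4 := by positivity
    rw [e3, hb1k, hb2k] at h13
    refine le_of_mul_le_mul_left ?_ hp
    linarith
  have t1 : 0 ≤ 1 - 2 * B0 + B0 ^ 2 * B3 := by
    have hp : 0 < g ^ 3 * k ^ 3 := by positivity
    rw [e0, e3, hb1k, hb2k] at he
    refine nonneg_of_mul_nonneg_right (a := g ^ 3 * k ^ 3) ?_ hp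
    linarith
  have t2 : 0 ≤ (1 - B0) - B0 * B3 + B0 ^ 2 * B4 := by
    have hp : 0 < g ^ 3 * k ^ 4 := by positivity
    rw [e0, e3, e4, hb1k, hb2k] at hs1
    refine nonneg_of_mul_nonneg_right (a := g ^ 3 * k ^ 4) ?_ hp
    linarith
  have t3 : 0 ≤ (1 - 2 * B3) + B0 * B3 ^ 2 + B4 * (1 - B0) := by
    have hp : 0 < g ^ 3 * k ^ 6 := by positivity
    rw [e0, e3, e4, hb1k, hb2k] at hs2
    refine nonneg_of_mul_nonneg_right (a := g ^ 3 * k ^ 6) ?_ hp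
    linarith
  have key : 1 - B4 ≤ 3 * (1 - B3) := key_b4 B0 B3 B4 n0 s0 n3 s3 t1 t2 t3
  rw [ev]
  apply mul_nonneg hg0.le
  have v1 : 0 ≤ a0 * B0 := mul_nonneg p0.le n0
  have v2 : 0 ≤ (3 * (1 - B3) - (1 - B4)) * (a4 * y ^ 4) :=
    mul_nonneg (by linarith) (by positivity)
  have v3 : 0 ≤ (1 - B3) * y ^ 3 * (a3 - 3 * a4 * y) :=
    mul_nonneg (mul_nonneg (by linarith) (by positivity)) (by linarith)
  have v4 : y * (-a1 + a2 * y - a3 * y ^ 2 + a4 * y ^ 3) = 0 := by rw [hq, mul_zero]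
  linarith

lemma point3 (a0 a1 a2 a3 a4 b0 b1 b2 b3 b4 : ℝ) (p0 : 0 < a0) (p2 : 0 < a2)
    (p3 : 0 < a3) (p4 : 0 < a4)
    (hb1 : 0 ≤ b1) (hb3 : 0 < b3) (hb4 : 0 < b4)
    (h04 : b0 * b4 ≤ b1 * b3) (h24 : b2 * b4 ≤ b3 * b3)
    (hd : 4 * a2 * a4 ≤ a3 ^ 2) (hd2 : 2 * a0 * a4 ≤ a1 * a3)
    (X : ℝ) (hX : X = (a3 / (2 * a4)) / (b4 / b3)) :
    a0 * b0 - a1 * b1 * X + a2 * b2 * X ^ 2 - a3 * b3 * X ^ 3 + a4 * b4 * X ^ 4 ≤ 0 := by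
  set k := b4 / b3 with hk
  have hk0 : 0 < k := div_pos hb4 hb3
  obtain ⟨g, hg⟩ : ∃ g, g = b3 / k ^ 3 := ⟨_, rfl⟩
  have hg0 : 0 < g := by rw [hg]; positivity
  have hb3k : b3 = g * k ^ 3 := by rw [hg]; field_simp
  have hb4k : b4 = g * k ^ 4 := by
    have : b4 = b3 * k := by rw [hk]; field_simp
    rw [this, hb3k]; ring
  clear_value k
  clear hg hk
  obtain ⟨y, hy⟩ : ∃ y, y = a3 / (2 * a4) := ⟨_, rfl⟩
  rw [← hy] at hX
  have hy0 : 0 < y := by rw [hy]; positivity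
  have ha3 : a3 = 2 * a4 * y := by rw [hy]; field_simp
  clear hy
  obtain ⟨B0, B1, B2, B3, B4, e0, e1, e2, e3, e4⟩ :=
    exists_scale b0 b1 b2 b3 b4 g k hg0.ne' hk0.ne'
  obtain rfl : B3 = 1 := by
    apply mul_left_cancel₀ (mul_pos hg0 (pow_pos hk0 3)).ne'; linarith
  obtain rfl : B4 = 1 := by
    apply mul_left_cancel₀ (mul_pos hg0 (pow_pos hk0 4)).ne'; linarith
  have ev := scale_eval a0 a1 a2 a3 a4 g k B0 B1 B2 1 1 y hk0.ne'
  rw [← e0, ← e1, ← e2, ← e3, ← e4, ← hX] at ev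
  have n1 : 0 ≤ B1 := by
    have hp : 0 < g * k := by positivity
    rw [e1] at hb1
    refine nonneg_of_mul_nonneg_right (a := g * k) ?_ hp
    linarith
  have s0 : B0 ≤ B1 := by
    have hp : 0 < g ^ 2 * k ^ 4 := by positivity
    rw [e0, e1, hb3k, hb4k] at h04
    refine le_of_mul_le_mul_left ?_ hp
    linarith
  have s2 : B2 ≤ 1 := by
    have hp : 0 < g ^ 2 * k ^ 6 := by positivity
    rw [e2, hb3k, hb4k] at h24
    refine le_of_mul_le_mul_left ?_ hp
    linarith
  have w1 : a0 ≤ a1 * y := by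
    rw [ha3] at hd2
    refine le_of_mul_le_mul_left ?_ p4
    linarith
  have w2 : a2 ≤ a4 * y ^ 2 := by
    rw [ha3] at hd
    refine le_of_mul_le_mul_left ?_ p4
    linarith
  rw [ev]
  apply mul_nonpos_of_nonneg_of_nonpos hg0.le
  have v1 : 0 ≤ a0 * (B1 - B0) := mul_nonneg p0.le (by linarith)
  have v2 : 0 ≤ (a1 * y - a0) * B1 := mul_nonneg (by linarith) n1
  have v3 : 0 ≤ (1 - B2) * (a2 * y ^ 2) := mul_nonneg (by linarith) (by positivity)
  have v4 : 0 ≤ (a4 * y ^ 2 - a2) * y ^ 2 := mul_nonneg (by linarith) (by positivity)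
  rw [ha3]
  linarith


lemma eq_zero_of_minor (x y w : ℝ) (hx : 0 < x) (hw : 0 ≤ w) (h : x * w ≤ y * y) (hy : y = 0) :
    w = 0 := by
  subst hy
  have : x * w ≤ 0 := by linarith
  have h2 : 0 ≤ x * w := mul_nonneg hx.le hw
  have h3 : x * w = 0 := le_antisymm this h2
  rcases mul_eq_zero.mp h3 with h | h
  · linarith
  · exact h

lemma suff (a0 a1 a2 a3 a4 : ℝ) (p0 : 0 < a0) (p1 : 0 < a1) (p2 : 0 < a2)
    (p3 : 0 < a3) (p4 : 0 < a4)
    (hd : 4 * a2 * a4 ≤ a3 ^ 2) (hd2 : 2 * a0 * a4 ≤ a1 * a3)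
    (m s : ℝ) (hm : 0 < m) (hms : m < s)
    (hqm : a0 - a1 * m + a2 * m ^ 2 - a3 * m ^ 3 + a4 * m ^ 4 ≤ 0)
    (hm2 : 2 * a3 * m ≤ a2) (hqs : -a1 + a2 * s - a3 * s ^ 2 + a4 * s ^ 3 = 0)
    (hs2 : 3 * a4 * s ≤ a3) (b : ℕ → ℝ) (h : IsMultiplyPositive 4 b) :
    IsTotallyPositive (sq5 (a0 * b 0) (a1 * b 1) (a2 * b 2) (a3 * b 3) (a4 * b 4)) := by
  have h02 := minor2 b h 0 1 (by norm_num)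
  have h03 := minor2 b h 0 2 (by norm_num)
  have h04 := minor2 b h 0 3 (by norm_num)
  have h13 := minor2 b h 1 2 (by norm_num)
  have h14 := minor2 b h 1 3 (by norm_num)
  have h24 := minor2 b h 2 3 (by norm_num)
  obtain ⟨q1, q2, q3⟩ := minors3 b h
  have n0 := nonneg_of_tp b h 0
  have n1 := nonneg_of_tp b h 1
  have n2 := nonneg_of_tp b h 2
  have n3 := nonneg_of_tp b h 3
  have n4 := nonneg_of_tp b h 4
  norm_num at h02 h03 h04 h13 h14 h24
  generalize b 0 = b0 at *
  generalize b 1 = b1 at *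
  generalize b 2 = b2 at *
  generalize b 3 = b3 at *
  generalize b 4 = b4 at *
  clear h b
  have hs : 0 < s := hm.trans hms
  have P1 := fun (c0 : 0 < b0) (c1 : 0 < b1) =>
    point1 a0 a1 a2 a3 a4 b0 b1 b2 b3 b4 m p2 p3 p4 c0 c1 h02 h03 h04 q1 hm hqm hm2 _ rfl
  have P2 := fun (c1 : 0 < b1) (c2 : 0 < b2) =>
    point2 a0 a1 a2 a3 a4 b0 b1 b2 b3 b4 s p0 p3 p4 n0 c1 c2 n3 h02 h13 q1 q2 q3 hs hqs hs2 _ rfl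
  have P3 := fun (c3 : 0 < b3) (c4 : 0 < b4) =>
    point3 a0 a1 a2 a3 a4 b0 b1 b2 b3 b4 p0 p2 p3 p4 n1 c3 c4 h04 h24 hd hd2 _ rfl
  have O12 : 0 < b0 → 0 < b1 → 0 < b2 → m / (b1 / b0) < s / (b2 / b1) := by
    intro c0 c1 c2
    have e1 : m / (b1 / b0) = m * (b0 / b1) := by field_simp
    have e2 : s / (b2 / b1) = s * (b1 / b2) := by field_simp
    have e3 : b0 / b1 ≤ b1 / b2 := by rw [div_le_div_iff₀ c1 c2]; exact h02
    rw [e1, e2]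
    exact mul_lt_mul hms e3 (by positivity) hs.le
  have O23 : 0 < b1 → 0 < b2 → 0 < b3 → 0 < b4 →
      s / (b2 / b1) < (a3 / (2 * a4)) / (b4 / b3) := by
    intro c1 c2 c3 c4
    have e1 : s / (b2 / b1) = s * (b1 / b2) := by field_simp
    have e2 : (a3 / (2 * a4)) / (b4 / b3) = (a3 / (2 * a4)) * (b3 / b4) := by field_simp
    have e3 : b1 / b2 ≤ b3 / b4 := by rw [div_le_div_iff₀ c2 c4]; linarith
    have e4 : s < a3 / (2 * a4) := by
      rw [lt_div_iff₀ (by positivity)]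
      have := mul_pos p4 hs
      linarith
    rw [e1, e2]
    exact mul_lt_mul e4 e3 (by positivity) (by positivity)
  clear q1 q2 q3
  rcases n0.eq_or_lt with c0 | c0
  · rcases n1.eq_or_lt with c1 | c1
    · subst c0 c1
      simp only [mul_zero]
      apply tp_shift
      apply tp_shift
      rcases n2.eq_or_lt with c2 | c2
      · subst c2
        simp only [mul_zero]
        exact tp_shift _ _ _ _ (tp_lin_s3 _ _ (by positivity) (by positivity))
      · rcases n3.eq_or_lt with c3 | c3
        · have c4 := eq_zero_of_minor b2 b3 b4 c2 n4 h24 c3.symm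
          subst c4
          simp only [mul_zero]
          exact tp_lin_s3 _ _ (by positivity) (by positivity)
        · rcases n4.eq_or_lt with c4 | c4
          · subst c4
            simp only [mul_zero]
            exact tp_lin_s3 _ _ (by positivity) (by positivity)
          · have r3 := P3 c3 c4
            have x3 : 0 < (a3 / (2 * a4)) / (b4 / b3) := by positivity
            generalize (a3 / (2 * a4)) / (b4 / b3) = X at *
            refine tp_quad _ _ _ (by positivity) (by positivity) (by positivity) X ?_
            refine le_of_mul_le_mul_left ?_ (pow_pos x3 2)
            linarith
    · subst c0
      simp only [mul_zero]
      apply tp_shift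
      rcases n2.eq_or_lt with c2 | c2
      · have c3 := eq_zero_of_minor b1 b2 b3 c1 n3 h13 c2.symm
        subst c3 c2
        have c4 : b4 = 0 := by
          have h' : b1 * b4 ≤ 0 := by linarith
          have h'' := nonpos_of_mul_nonpos_right h' c1
          linarith
        subst c4
        simp only [mul_zero]
        exact tp_const _ (by positivity)
      · rcases n3.eq_or_lt with c3 | c3
        · have c4 := eq_zero_of_minor b2 b3 b4 c2 n4 h24 c3.symm
          subst c4 c3
          simp only [mul_zero]
          exact tp_lin_s3 _ _ (by positivity) (by positivity)
        · have r2 := P2 c1 c2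
          have x2 : 0 < s / (b2 / b1) := by positivity
          rcases n4.eq_or_lt with c4 | c4
          · subst c4
            generalize s / (b2 / b1) = X at *
            simp only [mul_zero]
            refine tp_quad _ _ _ (by positivity) (by positivity) (by positivity) X ?_
            refine le_of_mul_le_mul_left ?_ x2
            linarith
          · have r3 := P3 c3 c4
            have o := O23 c1 c2 c3 c4
            generalize s / (b2 / b1) = X at *
            generalize (a3 / (2 * a4)) / (b4 / b3) = Y at *
            refine tp_cubic _ _ _ _ (by positivity) (by positivity) X Y x2 o ?_ ?_
            · refine le_of_mul_le_mul_left ?_ x2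
              linarith
            · refine le_of_mul_le_mul_left ?_ (x2.trans o)
              linarith
  · rcases n1.eq_or_lt with c1 | c1
    · have c2 := eq_zero_of_minor b0 b1 b2 c0 n2 h02 c1.symm
      subst c2 c1
      have c3 : b3 = 0 := by
        have h' : b0 * b3 ≤ 0 := by linarith
        have h'' := nonpos_of_mul_nonpos_right h' c0
        linarith
      have c4 : b4 = 0 := by
        have h' : b0 * b4 ≤ 0 := by linarith
        have h'' := nonpos_of_mul_nonpos_right h' c0
        linarith
      subst c3 c4
      simp only [mul_zero]
      exact tp_const _ (by positivity)
    · rcases n2.eq_or_lt with c2 | c2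
      · have c3 := eq_zero_of_minor b1 b2 b3 c1 n3 h13 c2.symm
        subst c3 c2
        have c4 : b4 = 0 := by
          have h' : b1 * b4 ≤ 0 := by linarith
          have h'' := nonpos_of_mul_nonpos_right h' c1
          linarith
        subst c4
        simp only [mul_zero]
        exact tp_lin_s3 _ _ (by positivity) (by positivity)
      · have r1 := P1 c0 c1
        have x1 : 0 < m / (b1 / b0) := by positivity
        rcases n3.eq_or_lt with c3 | c3
        · have c4 := eq_zero_of_minor b2 b3 b4 c2 n4 h24 c3.symm
          subst c4 c3
          generalize m / (b1 / b0) = X at *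
          simp only [mul_zero]
          refine tp_quad _ _ _ (by positivity) (by positivity) (by positivity) X ?_
          linarith
        · have r2 := P2 c1 c2
          have o12 := O12 c0 c1 c2
          rcases n4.eq_or_lt with c4 | c4
          · subst c4
            generalize m / (b1 / b0) = X at *
            generalize s / (b2 / b1) = Y at *
            simp only [mul_zero]
            refine tp_cubic _ _ _ _ (by positivity) (by positivity) X Y x1 o12 ?_ ?_
            · linarith
            · linarith
          · exact tp_quartic _ _ _ _ _ (by positivity) (by positivity) _ _ _ x1 o12
              (O23 c1 c2 c3 c4) r1 r2 (P3 c3 c4)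

lemma eq_sq5 (a b : ℕ → ℝ) (h5 : ∀ k, 5 ≤ k → a k = 0) :
    (fun k => a k * b k) = sq5 (a 0 * b 0) (a 1 * b 1) (a 2 * b 2) (a 3 * b 3) (a 4 * b 4) := by
  funext k
  match k with
  | 0 => rfl
  | 1 => rfl
  | 2 => rfl
  | 3 => rfl
  | 4 => rfl
  | n + 5 =>
    have : a (n + 5) = 0 := h5 _ (by omega)
    simp [this, sq5]

lemma roots_suff (a : ℕ → ℝ) (hpos : ∀ k ≤ 4, 0 < a k) (h5 : ∀ k, 5 ≤ k → a k = 0)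
    (h : (∀ z : ℂ, (a 0 : ℂ) + (a 1 : ℂ) * z + (a 2 : ℂ) * z ^ 2 + (a 3 : ℂ) * z ^ 3
            + (a 4 : ℂ) * z ^ 4 = 0 → ∃ x : ℝ, z = (x : ℂ)) ∧
       (∀ z : ℂ, (a 1 : ℂ) * z + (a 2 : ℂ) * z ^ 2 + (a 3 : ℂ) * z ^ 3
            + (a 4 : ℂ) * z ^ 4 = 0 → ∃ x : ℝ, z = (x : ℂ)) ∧
       (∀ z : ℂ, (a 2 : ℂ) * z ^ 2 + (a 3 : ℂ) * z ^ 3 + (a 4 : ℂ) * z ^ 4 = 0 →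
            ∃ x : ℝ, z = (x : ℂ))) :
    ∀ b : ℕ → ℝ, IsMultiplyPositive 4 b → IsTotallyPositive fun k => a k * b k := by
  intro b hb
  obtain ⟨r4, r3, r2⟩ := h
  have p0 := hpos 0 (by norm_num)
  have p1 := hpos 1 (by norm_num)
  have p2 := hpos 2 (by norm_num)
  have p3 := hpos 3 (by norm_num)
  have p4 := hpos 4 (by norm_num)
  obtain ⟨hd, hd2, m, s, hm, hms, hqm, hm2, hqs, hs2⟩ :=
    base (a 0) (a 1) (a 2) (a 3) (a 4) p0 p1 p2 p3 p4 r4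
      (fun z hz => r3 z (by linear_combination z * hz))
      (fun z hz => r2 z (by linear_combination z ^ 2 * hz))
  rw [eq_sq5 a b h5]
  exact suff _ _ _ _ _ p0 p1 p2 p3 p4 hd hd2 m s hm hms hqm hm2 hqs hs2 b hb

lemma preserver_three (a : ℕ → ℝ) (hpos : ∀ k ≤ 4, 0 < a k) (h5 : ∀ k, 5 ≤ k → a k = 0)
    (hp : IsTPPreserver a) :
    (∀ z : ℂ, (a 0 : ℂ) + (a 1 : ℂ) * z + (a 2 : ℂ) * z ^ 2 + (a 3 : ℂ) * z ^ 3
            + (a 4 : ℂ) * z ^ 4 = 0 → ∃ x : ℝ, z = (x : ℂ)) ∧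
       (∀ z : ℂ, (a 1 : ℂ) * z + (a 2 : ℂ) * z ^ 2 + (a 3 : ℂ) * z ^ 3
            + (a 4 : ℂ) * z ^ 4 = 0 → ∃ x : ℝ, z = (x : ℂ)) ∧
       (∀ z : ℂ, (a 2 : ℂ) * z ^ 2 + (a 3 : ℂ) * z ^ 3 + (a 4 : ℂ) * z ^ 4 = 0 →
            ∃ x : ℝ, z = (x : ℂ)) := by
  have p4 := hpos 4 (by norm_num)
  refine ⟨fun z hz => ?_, fun z hz => ?_, fun z hz => ?_⟩
  · refine preserver_roots a h5 p4 hp 0 (by norm_num) z ?_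
    simp [Finset.sum_range_succ]
    linear_combination hz
  · refine preserver_roots a h5 p4 hp 1 (by norm_num) z ?_
    simp [Finset.sum_range_succ]
    linear_combination hz
  · refine preserver_roots a h5 p4 hp 2 (by norm_num) z ?_
    simp [Finset.sum_range_succ]
    linear_combination hz


/-- five-term sequences. -/
theorem stmt_3 (a : ℕ → ℝ) (hpos : ∀ k ≤ 4, 0 < a k) (h5 : ∀ k, 5 ≤ k → a k = 0) :
    (IsTPPreserver a ↔
      ((∀ z : ℂ, (a 0 : ℂ) + (a 1 : ℂ) * z + (a 2 : ℂ) * z ^ 2 + (a 3 : ℂ) * z ^ 3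
            + (a 4 : ℂ) * z ^ 4 = 0 → ∃ x : ℝ, z = (x : ℂ)) ∧
       (∀ z : ℂ, (a 1 : ℂ) * z + (a 2 : ℂ) * z ^ 2 + (a 3 : ℂ) * z ^ 3
            + (a 4 : ℂ) * z ^ 4 = 0 → ∃ x : ℝ, z = (x : ℂ)) ∧
       (∀ z : ℂ, (a 2 : ℂ) * z ^ 2 + (a 3 : ℂ) * z ^ 3 + (a 4 : ℂ) * z ^ 4 = 0 →
            ∃ x : ℝ, z = (x : ℂ)))) ∧
    (IsTPPreserver a ↔
      ∀ b : ℕ → ℝ, IsMultiplyPositive 4 b → IsTotallyPositive fun k => a k * b k) := by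
  have back : (∀ b : ℕ → ℝ, IsMultiplyPositive 4 b → IsTotallyPositive fun k => a k * b k) →
      IsTPPreserver a := fun h b hb => h b (fun n _ i j hi hj => hb n i j hi hj)
  exact ⟨⟨preserver_three a hpos h5, fun h => back (roots_suff a hpos h5 h)⟩,
    ⟨fun h => roots_suff a hpos h5 (preserver_three a hpos h5 h), back⟩⟩
end

section
/- If a nonnegative sequence (a_k)_{k=0}^∞ is a TP_∞-preserver, then the sequence (k·a_k)_{k=0}^∞ (the coefficient sequence of z·A′(z), where A(z) = ∑ a_k z^k) is a totally positive sequence. -/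
/-- Delta matrices between strictly increasing sequences have nonnegative determinant. -/
theorem delta_det_nonneg (n : ℕ) (i m : Fin n → ℕ) (hi : StrictMono i) (hm : StrictMono m) :
    0 ≤ (Matrix.of fun q p : Fin n => if i p = m q then (1 : ℝ) else 0).det := by
  rw [Matrix.det_apply]
  refine Finset.sum_nonneg fun σ _ => ?_
  by_cases h : ∀ q, i q = m (σ q)
  · have hs : StrictMono (σ : Fin n → Fin n) := by
      intro x y hxy
      have h1 := hi hxy
      rw [h x, h y] at h1
      exact hm.lt_iff_lt.1 h1
    have h1 : (σ : Fin n → Fin n) = id :=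
      (StrictMono.range_inj hs strictMono_id).1 (by simp)
    have h2 : σ = 1 := Equiv.ext fun x => congrFun h1 x
    subst h2
    simp only [Equiv.Perm.sign_one, one_smul]
    refine Finset.prod_nonneg fun q _ => ?_
    simp only [Matrix.of_apply]
    split_ifs <;> norm_num
  · push Not at h
    obtain ⟨q, hq⟩ := h
    rw [Finset.prod_eq_zero (Finset.mem_univ q) (by simp [hq])]
    simp

/-- Partial sums preserve nonnegativity of minors. -/
theorem sum_det_nonneg (n : ℕ) (h : ℕ → Fin n → ℝ)
    (H : ∀ m : Fin n → ℕ, StrictMono m → 0 ≤ (Matrix.of fun q p : Fin n => h (m q) p).det)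
    (j : Fin n → ℕ) (hj : StrictMono j) :
    0 ≤ (Matrix.of fun q p : Fin n => ∑ m ∈ Finset.range (j q), h m p).det := by
  cases n with
  | zero => simp
  | succ n =>
    let lo : Fin (n + 1) → ℕ := Fin.cases 0 (fun q => j q.castSucc)
    have e : (Matrix.of fun q p : Fin (n+1) => ∑ m ∈ Finset.range (j q), h m p).det
        = (Matrix.of fun q : Fin (n+1) => ∑ m ∈ Finset.Ico (lo q) (j q), h m).det := by
      refine Matrix.det_eq_of_forall_row_eq_smul_add_pred (fun _ => 1) ?_ ?_
      · intro p
        simp [lo, Finset.sum_apply]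
      · intro q p
        have hle : j q.castSucc ≤ j q.succ := (hj Fin.castSucc_lt_succ).le
        simp only [Matrix.of_apply, lo, Fin.cases_succ, Finset.sum_apply, one_mul]
        rw [add_comm, Finset.sum_range_add_sum_Ico _ hle]
    rw [e]
    have e2 := (Matrix.detRowAlternating (R := ℝ) (n := Fin (n+1))).toMultilinearMap.map_sum_finset
      (fun _ m => h m) (fun q => Finset.Ico (lo q) (j q))
    have e3 : (Matrix.of fun q : Fin (n+1) => ∑ m ∈ Finset.Ico (lo q) (j q), h m).det
       = ∑ r ∈ Fintype.piFinset (fun q => Finset.Ico (lo q) (j q)),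
          (Matrix.of fun q p : Fin (n+1) => h (r q) p).det := e2
    rw [e3]
    refine Finset.sum_nonneg fun r hr => H r ?_
    rw [Fintype.mem_piFinset] at hr
    refine Fin.strictMono_iff_lt_succ.2 fun q => ?_
    have h1 := (Finset.mem_Ico.1 (hr q.castSucc)).2
    have h2 := (Finset.mem_Ico.1 (hr q.succ)).1
    simp only [lo, Fin.cases_succ] at h2
    omega

theorem id_totallyPositive : IsTotallyPositive (fun k => (k : ℝ)) := by
  intro n i j hi hj
  have H1 : ∀ m : Fin n → ℕ, StrictMono m →
      0 ≤ (Matrix.of fun q p : Fin n => if i p ≤ m q then (1 : ℝ) else 0).det := by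
    intro m hm
    have := sum_det_nonneg n (fun k p => if i p = k then (1 : ℝ) else 0)
      (fun m hm => delta_det_nonneg n i m hi hm) (fun q => m q + 1)
      (fun x y hxy => Nat.succ_lt_succ (hm hxy))
    simpa [Finset.sum_ite_eq, Nat.lt_succ_iff] using this
  have H2 := sum_det_nonneg n (fun k p => if i p ≤ k then (1 : ℝ) else 0) H1 j hj
  rw [← Matrix.det_transpose] at H2
  convert H2 using 2
  ext p q
  simp only [Matrix.transpose_apply, Matrix.of_apply, Finset.sum_boole]
  have : (Finset.range (j q)).filter (fun k => i p ≤ k) = Finset.Ico (i p) (j q) := by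
    ext k; simp [and_comm]
  rw [this, Nat.card_Ico]
  split_ifs with h
  · rfl
  · rw [Nat.sub_eq_zero_of_le (by omega)]; simp

/-- if `a` is a TP_∞-preserver then `(k * a_k)` is totally positive. -/
theorem stmt_5 (a : ℕ → ℝ) (ha : ∀ k, 0 ≤ a k) (hpres : IsTPPreserver a) :
    IsTotallyPositive (fun k => (k : ℝ) * a k) := by
  have h := hpres _ id_totallyPositive
  simpa only [mul_comm] using h
end

section
/- If a nonnegative sequence (a_k)_{k=0}^∞ is a TP_∞-preserver, then the sequence ((k+1)·a_k)_{k=0}^∞ (the coefficient sequence of (z·A(z))′, where A(z) = ∑ a_k z^k) is a totally positive sequence. -/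
/-- Truncated-linear kernel determinants are nonnegative. -/
lemma det_trunc_nonneg : ∀ (n : ℕ) (y x : Fin n → ℝ), Monotone y → Monotone x →
    0 ≤ (Matrix.of fun p q : Fin n => max (x q - y p) 0).det := by
  intro n
  induction n with
  | zero => intro y x _ _; simp
  | succ n ih =>
    intro y x hy hx
    by_cases h1 : ∀ p : Fin n, x 0 ≤ y p.succ
    · rw [Matrix.det_succ_column_zero, Fin.sum_univ_succ, Finset.sum_eq_zero]
      · have := ih (fun p => y p.succ) (fun p => x p.succ)
          (fun a b h => hy (Fin.succ_le_succ_iff.2 h)) (fun a b h => hx (Fin.succ_le_succ_iff.2 h))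
        simp only [Fin.val_zero, pow_zero, one_mul, add_zero]
        refine mul_nonneg (le_max_right _ _) ?_
        have e : (Matrix.of fun p q : Fin (n+1) => max (x q - y p) 0).submatrix
            (Fin.succAbove 0) Fin.succ =
            Matrix.of fun p q : Fin n => max (x q.succ - y p.succ) 0 := by
          ext p q; simp
        rw [e]; exact this
      · intro p _
        have : max (x 0 - y p.succ) 0 = 0 := max_eq_right (by linarith [h1 p])
        simp [this]
    · push Not at h1
      obtain ⟨p1, hp1⟩ := h1
      cases n with
      | zero => exact p1.elim0
      | succ m =>
        have hy01 : y 0 ≤ y 1 := hy (Fin.zero_le _)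
        have hy1 : y 1 < x 0 := by
          refine lt_of_le_of_lt (hy ?_) hp1
          rw [← Fin.succ_zero_eq_one]
          exact Fin.succ_le_succ_iff.2 (Fin.zero_le _)
        have hx0 : ∀ q, x 0 ≤ x q := fun q => hx (Fin.zero_le _)
        have hxx : ∀ q z, z < x 0 → max (x q - z) 0 = x q - z := fun q z hz =>
          max_eq_left (by linarith [hx0 q])
        have hy0 : y 0 < x 0 := by linarith
        by_cases h2 : ∀ p : Fin m, x 0 ≤ y p.succ.succ
        · -- the main case
          have key : (Matrix.of fun p q : Fin (m+2) => max (x q - y p) 0).det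
              = (y 1 - y 0) * (Matrix.of fun p q : Fin (m+1) =>
                max (x q.succ - (Fin.cons (x 0) (fun p : Fin m => y p.succ.succ) :
                  Fin (m+1) → ℝ) p) 0).det := by
            rw [Matrix.det_succ_column_zero, Fin.sum_univ_succ, Fin.sum_univ_succ,
              Finset.sum_eq_zero]
            · simp only [Matrix.det_succ_row_zero, Finset.mul_sum, add_zero]
              rw [← Finset.sum_add_distrib]
              refine Finset.sum_congr rfl fun q _ => ?_
              have e1 : ((((Matrix.of fun p q : Fin (m+2) => max (x q - y p) 0).submatrix
                  (Fin.succAbove 0) Fin.succ).submatrix Fin.succ q.succAbove)) =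
                  Matrix.of fun p r : Fin m => max (x (q.succAbove r).succ - y p.succ.succ) 0 := by
                ext p r; simp
              have e2 : ((((Matrix.of fun p q : Fin (m+2) => max (x q - y p) 0).submatrix
                  (Fin.succAbove (Fin.succ 0)) Fin.succ).submatrix Fin.succ q.succAbove)) =
                  Matrix.of fun p r : Fin m => max (x (q.succAbove r).succ - y p.succ.succ) 0 := by
                ext p r; simp
              have e3 : ((Matrix.of fun p q : Fin (m+1) =>
                max (x q.succ - (Fin.cons (x 0) (fun p : Fin m => y p.succ.succ) :
                  Fin (m+1) → ℝ) p) 0).submatrix Fin.succ q.succAbove) =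
                  Matrix.of fun p r : Fin m => max (x (q.succAbove r).succ - y p.succ.succ) 0 := by
                ext p r; simp
              rw [e1, e2, e3]
              generalize (Matrix.of fun p r : Fin m =>
                max (x (q.succAbove r).succ - y p.succ.succ) 0).det = D
              have e4 : max (x q.succ - x 0) 0 = x q.succ - x 0 :=
                max_eq_left (by linarith [hx0 q.succ])
              simp [hxx _ _ hy0, hxx _ _ hy1, e4]
              ring
            · intro p _
              have : max (x 0 - y p.succ.succ) 0 = 0 := max_eq_right (by linarith [h2 p])
              simp [this]
          rw [key]
          refine mul_nonneg (by linarith) (ih _ (fun q => x q.succ) ?_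
            (fun a b h => hx (Fin.succ_le_succ_iff.2 h)))
          intro a b hab
          induction a using Fin.cases with
          | zero =>
            induction b using Fin.cases with
            | zero => exact le_rfl
            | succ b => simpa using h2 b
          | succ a =>
            induction b using Fin.cases with
            | zero => exact absurd hab (by simp)
            | succ b =>
              simpa using hy (Fin.succ_le_succ_iff.2 hab)
        · push Not at h2
          obtain ⟨p, hp⟩ := h2
          refine le_of_eq (Eq.symm ?_)
          rcases hy01.eq_or_lt with h | h
          · exact Matrix.det_zero_of_row_eq (i := 0) (j := 1) (by simp) (by ext q; simp [h])
          · have hyp : y 1 ≤ y p.succ.succ := hy (by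
              rw [← Fin.succ_zero_eq_one]
              exact Fin.succ_le_succ_iff.2 (Fin.zero_le _))
            rw [← Matrix.exists_vecMul_eq_zero_iff]
            refine ⟨Pi.single 0 (y p.succ.succ - y 1) + Pi.single 1 (-(y p.succ.succ - y 0))
              + Pi.single p.succ.succ (y 1 - y 0), ?_, ?_⟩
            · intro h0
              have := congrFun h0 1
              have hne : (1 : Fin (m+2)) ≠ p.succ.succ := by
                rw [← Fin.succ_zero_eq_one]
                intro h; exact (Fin.succ_ne_zero p) (Fin.succ_injective _ h).symm
              simp [hne] at this
              linarith
            · ext q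
              simp [Matrix.add_vecMul, Matrix.single_vecMul, hxx _ _ hy0, hxx _ _ hy1, hxx _ _ hp]
              ring

lemma isTotallyPositive_succ : IsTotallyPositive (fun k => (k : ℝ) + 1) := by
  intro n i j hi hj
  have := det_trunc_nonneg n (fun p => (i p : ℝ)) (fun q => (j q : ℝ) + 1)
    (fun a b h => by simpa using hi.monotone h) (fun a b h => by simpa using hj.monotone h)
  convert this using 4 with p
  ext q
  dsimp only
  split_ifs with h
  · have h' : (i p : ℝ) ≤ j q := by exact_mod_cast h
    rw [max_eq_left (by linarith), Nat.cast_sub h]; ring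
  · have h' : (j q : ℝ) + 1 ≤ i p := by exact_mod_cast (not_le.1 h)
    rw [max_eq_right (by linarith)]

/-- if `a` is a TP_∞-preserver then `((k+1) * a_k)` is totally positive. -/
theorem stmt_6 (a : ℕ → ℝ) (ha : ∀ k, 0 ≤ a k) (hpres : IsTPPreserver a) :
    IsTotallyPositive (fun k => ((k : ℝ) + 1) * a k) := by
  have h := hpres _ isTotallyPositive_succ
  simpa only [mul_comm] using h
end
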